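/- arXiv:2012.14135 — 2 statements merged into one kernel-verified Lean document; each statement's English description precedes it below -/
import Mathlib

section
/- Under assumptions (A1)–(A2), there exist constants C₁, C₂, C₃ depending only on the bounds in (A1)–(A2) such that for all admissible states u = (ρ,w), û = (ρ̂,ŵ) and all residuals ê₁ ∈ L²(0,ℓ), ê₂ ∈ L²(0,ℓ): ∫₀^ℓ ê₁ (ε²(w² − ŵ²)/2 + P'(ρ) − P'(ρ̂)) dx + ∫₀^ℓ ê₂ a (ρw − ρ̂ŵ) dx ≤ H(u|û) + D(u|û) + C₁‖ê₁‖²_{L²} + C₂‖ê₂‖²_{L²} + C₃‖ê₂‖^{3/2}_{L^{3/2}}, where D(u|û) = (1/16) ∫₀^ℓ γ a ρ̂ (|w| + |ŵ|)(w − ŵ)² dx. -/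
/-- The relative energy `H(u|û)` of the rescaled barotropic gas flow system. -/
noncomputable def relEnergy (ℓ g ε : ℝ) (a z P : ℝ → ℝ) (ρ w ρh wh : ℝ → ℝ) : ℝ :=
  ∫ x in (0:ℝ)..ℓ,
    (a x * (ε ^ 2 * ρ x * (w x) ^ 2 / 2 + P (ρ x) + g * z x * ρ x)
      - a x * (ε ^ 2 * ρh x * (wh x) ^ 2 / 2 + P (ρh x) + g * z x * ρh x)
      - (a x * (ε ^ 2 * (wh x) ^ 2 / 2 + deriv P (ρh x) + g * z x) * (ρ x - ρh x)
          + a x * ε ^ 2 * ρh x * wh x * (w x - wh x)))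

/-- The relative dissipation
`D(u|û) = (1/16) ∫₀^ℓ γ a ρ̂ (|w| + |ŵ|)(w − ŵ)² dx`. -/
noncomputable def relDissipation (ℓ : ℝ) (γ a ρh w wh : ℝ → ℝ) : ℝ :=
  (1 / 16) * ∫ x in (0:ℝ)..ℓ,
    γ x * a x * ρh x * (|w x| + |wh x|) * (w x - wh x) ^ 2


lemma taylor_aux (f f1 f2 : ℝ → ℝ) (c : ℝ)
    (h1 : ∀ t, HasDerivAt f (f1 t) t) (h2 : ∀ t, HasDerivAt f1 (f2 t) t)
    (hc : ∀ t ∈ Set.Icc (0:ℝ) 1, c ≤ f2 t) : c / 2 ≤ f 1 - f 0 - f1 0 := by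
  have m1 : MonotoneOn (fun t => f1 t - c * t) (Set.Icc (0:ℝ) 1) := by
    have hd : ∀ t, HasDerivAt (fun t => f1 t - c * t) (f2 t - c * 1) t := fun t =>
      (h2 t).sub ((hasDerivAt_id t).const_mul c)
    apply monotoneOn_of_deriv_nonneg (convex_Icc 0 1)
    · exact fun t _ => (hd t).continuousAt.continuousWithinAt
    · exact fun t _ => (hd t).differentiableAt.differentiableWithinAt
    · intro t ht
      rw [(hd t).deriv]
      have := hc t (interior_subset ht)
      linarith
  have m2 : MonotoneOn (fun t => f t - f1 0 * t - c / 2 * t ^ 2) (Set.Icc (0:ℝ) 1) := by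
    have hd : ∀ t, HasDerivAt (fun t => f t - f1 0 * t - c / 2 * t ^ 2)
        (f1 t - f1 0 * 1 - c / 2 * (2 * t)) t := fun t => by
      have := ((h1 t).sub ((hasDerivAt_id t).const_mul (f1 0))).sub
        ((hasDerivAt_pow 2 t).const_mul (c / 2))
      refine this.congr_deriv ?_
      simp
    apply monotoneOn_of_deriv_nonneg (convex_Icc 0 1)
    · exact fun t _ => (hd t).continuousAt.continuousWithinAt
    · exact fun t _ => (hd t).differentiableAt.differentiableWithinAt
    · intro t ht
      rw [(hd t).deriv]
      have ht' := interior_subset ht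
      have := m1 (Set.left_mem_Icc.2 zero_le_one) ht' ht'.1
      simp only at this
      linarith
  have := m2 (Set.left_mem_Icc.2 zero_le_one) (Set.right_mem_Icc.2 zero_le_one) zero_le_one
  simp only at this
  linarith

lemma energy_lower (P : ℝ → ℝ) (hP : ContDiff ℝ (⊤ : ℕ∞) P)
    (rlo rhi wbar εbar : ℝ) (hrlo : 0 < rlo) (hrr : rlo ≤ rhi)
    (hwbar : 0 < wbar) (hεbar : 0 < εbar)
    (hA1 : ∀ r ∈ Set.Icc rlo rhi, 4 * εbar ^ 2 * wbar ^ 2 ≤ r * deriv (deriv P) r)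
    (ε r s v u : ℝ) (hε : 0 ≤ ε) (hε' : ε ≤ εbar)
    (hr : r ∈ Set.Icc rlo rhi) (hs : s ∈ Set.Icc rlo rhi) (hv : |v| ≤ wbar) (hu : |u| ≤ wbar) :
    (4 * εbar ^ 2 * wbar ^ 2 / rhi * (r - s) ^ 2 + ε ^ 2 * rlo * (v - u) ^ 2) / 4 ≤
      ε ^ 2 * r * v ^ 2 / 2 + P r - (ε ^ 2 * s * u ^ 2 / 2 + P s)
       - ((ε ^ 2 * u ^ 2 / 2 + deriv P s) * (r - s) + ε ^ 2 * s * u * (v - u)) := by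
  have hP1 : ∀ y, HasDerivAt P (deriv P y) y := fun y =>
    (hP.differentiable (by simp) y).hasDerivAt
  have hP2 : ∀ y, HasDerivAt (deriv P) (deriv (deriv P) y) y := fun y => by
    have h : ContDiff ℝ (⊤ : ℕ∞) (deriv P) := ((contDiff_infty_iff_deriv).1 hP).2
    exact (h.differentiable (by simp) y).hasDerivAt
  have l1 : ∀ t, HasDerivAt (fun t : ℝ => s + t * (r - s)) (r - s) t := fun t => by
    simpa using ((hasDerivAt_id t).mul_const (r - s)).const_add s
  have l2 : ∀ t, HasDerivAt (fun t : ℝ => u + t * (v - u)) (v - u) t := fun t => by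
    simpa using ((hasDerivAt_id t).mul_const (v - u)).const_add u
  have key := taylor_aux
    (fun t => ε ^ 2 / 2 * ((s + t * (r - s)) * (u + t * (v - u)) ^ 2) + P (s + t * (r - s)))
    (fun t => ε ^ 2 / 2 * ((r - s) * (u + t * (v - u)) ^ 2
        + (s + t * (r - s)) * (2 * (u + t * (v - u)) * (v - u)))
        + deriv P (s + t * (r - s)) * (r - s))
    (fun t => ε ^ 2 / 2 * ((r - s) * (2 * (u + t * (v - u)) * (v - u))
        + ((r - s) * (2 * (u + t * (v - u)) * (v - u))
          + (s + t * (r - s)) * (2 * (v - u) * (v - u))))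
        + deriv (deriv P) (s + t * (r - s)) * (r - s) * (r - s))
    ((4 * εbar ^ 2 * wbar ^ 2 / rhi * (r - s) ^ 2 + ε ^ 2 * rlo * (v - u) ^ 2) / 2)
    (fun t => by
      have q := (l2 t).fun_pow 2
      have := (((l1 t).mul q).const_mul (ε ^ 2 / 2)).add ((hP1 _).comp t (l1 t))
      refine this.congr_deriv ?_
      simp)
    (fun t => by
      have q := (l2 t).fun_pow 2
      have q1 := ((l2 t).const_mul 2).mul_const (v - u)
      have := ((((q.const_mul (r - s)).add ((l1 t).mul q1))).const_mul (ε ^ 2 / 2)).add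
        (((hP2 _).comp t (l1 t)).mul_const (r - s))
      refine this.congr_deriv ?_
      simp)
    (fun t ht => by
      have hR : s + t * (r - s) ∈ Set.Icc rlo rhi := by
        obtain ⟨h0, h1⟩ := ht
        constructor
        · nlinarith [hr.1, hs.1, mul_nonneg h0 (sub_nonneg.2 hr.1),
            mul_nonneg (sub_nonneg.2 h1) (sub_nonneg.2 hs.1)]
        · nlinarith [hr.1, hs.1, mul_nonneg h0 (sub_nonneg.2 hr.2),
            mul_nonneg (sub_nonneg.2 h1) (sub_nonneg.2 hs.2)]
      have hW : |u + t * (v - u)| ≤ wbar := by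
        obtain ⟨h0, h1⟩ := ht
        rw [abs_le] at *
        constructor
        · nlinarith [mul_nonneg h0 (by linarith : 0 ≤ v + wbar),
            mul_nonneg (sub_nonneg.2 h1) (by linarith : 0 ≤ u + wbar)]
        · nlinarith [mul_nonneg h0 (by linarith : 0 ≤ wbar - v),
            mul_nonneg (sub_nonneg.2 h1) (by linarith : 0 ≤ wbar - u)]
      have hA := hA1 _ hR
      generalize s + t * (r - s) = R at *
      generalize u + t * (v - u) = W at *
      generalize deriv (deriv P) R = Q at *
      generalize r - s = d
      generalize v - u = δ
      have hR0 : 0 < R := lt_of_lt_of_le hrlo hR.1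
      have hW2 : W ^ 2 ≤ wbar ^ 2 := sq_le_sq' (abs_le.1 hW).1 (abs_le.1 hW).2
      have hE2 : ε ^ 2 ≤ εbar ^ 2 := pow_le_pow_left₀ hε hε' 2
      have hEW : 4 * (ε ^ 2 * W ^ 2) ≤ R * Q := by
        have : ε ^ 2 * W ^ 2 ≤ εbar ^ 2 * wbar ^ 2 := by gcongr
        linarith
      have hQ0 : 4 * εbar ^ 2 * wbar ^ 2 / rhi ≤ Q := by
        have hQp : 0 ≤ Q := by
          by_contra hn
          push Not at hn
          have : R * Q < 0 := mul_neg_of_pos_of_neg hR0 hn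
          have : 0 ≤ 4 * εbar ^ 2 * wbar ^ 2 := by positivity
          linarith
        rw [div_le_iff₀ (by linarith)]
        nlinarith [hR.2]
      have hdd : 4 * εbar ^ 2 * wbar ^ 2 / rhi * d ^ 2 ≤ Q * d ^ 2 := by gcongr
      have hδδ : ε ^ 2 * rlo * δ ^ 2 ≤ ε ^ 2 * R * δ ^ 2 := by
        have := hR.1
        gcongr
      have hY : 0 ≤ 2 * ε ^ 2 * W * d * δ + Q * d ^ 2 / 2 + ε ^ 2 * R * δ ^ 2 / 2 := by
        have h : 0 ≤ R * (2 * ε ^ 2 * W * d * δ + Q * d ^ 2 / 2 + ε ^ 2 * R * δ ^ 2 / 2) := by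
          nlinarith [mul_nonneg (sub_nonneg.2 hEW) (sq_nonneg d),
            sq_nonneg (ε * (2 * W * d + R * δ))]
        exact nonneg_of_mul_nonneg_right h hR0
      nlinarith)
  simp only [zero_mul, add_zero, one_mul, add_sub_cancel] at key
  nlinarith

lemma young_aux (k x y : ℝ) (hk : 0 < k) (hx : 0 ≤ x) (hy : 0 ≤ y) :
    x * y ≤ k * y ^ 3 + (1 / √k) * x ^ ((3:ℝ) / 2) := by
  have hq : x ^ ((3:ℝ) / 2) = x * √x := by
    rw [show (3:ℝ) / 2 = 1 + 1 / 2 by norm_num, Real.rpow_add_of_nonneg hx (by norm_num)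
      (by norm_num), Real.rpow_one, Real.sqrt_eq_rpow]
  rw [hq]
  have hsk : 0 < √k := Real.sqrt_pos.2 hk
  rcases le_total x (k * y ^ 2) with h | h
  · have h1 : x * y ≤ k * y ^ 2 * y := by gcongr
    have : 0 ≤ 1 / √k * (x * √x) := by positivity
    nlinarith
  · have h1 : √k * y ≤ √x := by
      apply Real.le_sqrt_of_sq_le
      rw [mul_pow, Real.sq_sqrt hk.le]
      exact h
    have h2 : y ≤ 1 / √k * √x := by
      rw [one_div, inv_mul_eq_div, le_div_iff₀ hsk]
      linarith
    have h3 : x * y ≤ x * (1 / √k * √x) := by gcongr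
    have : 0 ≤ k * y ^ 3 := by positivity
    nlinarith

lemma young2 (c A x y : ℝ) (hc : 0 < c) : A * (x * y) ≤ c * y ^ 2 + A ^ 2 / (4 * c) * x ^ 2 := by
  have h : c * y ^ 2 + A ^ 2 / (4 * c) * x ^ 2 - A * (x * y) = c * (y - A / (2 * c) * x) ^ 2 := by
    field_simp
    ring
  have : 0 ≤ c * (y - A / (2 * c) * x) ^ 2 := by positivity
  linarith

/-- condition (C3): under assumptions (A1)–(A2) there exist
constants `C₁, C₂, C₃` depending only on the bounds in (A1)–(A2) such that
`⟨ê, z(u) − z(û)⟩ = ∫₀^ℓ ê₁ (ε²(w²−ŵ²)/2 + P'(ρ) − P'(ρ̂)) dx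
   + ∫₀^ℓ ê₂ a (ρw − ρ̂ŵ) dx
 ≤ H(u|û) + D(u|û) + C₁‖ê₁‖²_{L²} + C₂‖ê₂‖²_{L²} + C₃‖ê₂‖^{3/2}_{L^{3/2}}`. -/
theorem residual_duality_bound
    (ℓ g : ℝ) (hℓ : 0 < ℓ)
    (P : ℝ → ℝ) (hP : ContDiff ℝ (⊤ : ℕ∞) P) (hPconv : StrictConvexOn ℝ (Set.Ioi 0) P)
    (rlo rhi wbar εbar alo ahi γlo γhi gzbar : ℝ)
    (hrlo : 0 < rlo) (hrr : rlo ≤ rhi) (hwbar : 0 < wbar) (hεbar : 0 < εbar)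
    (halo : 0 < alo) (haa : alo ≤ ahi) (hγlo : 0 < γlo) (hγγ : γlo ≤ γhi)
    (hA1 : ∀ r ∈ Set.Icc rlo rhi, 4 * εbar ^ 2 * wbar ^ 2 ≤ r * deriv (deriv P) r) :
    ∃ C1 C2 C3 : ℝ, 0 ≤ C1 ∧ 0 ≤ C2 ∧ 0 ≤ C3 ∧
      ∀ (a z γ : ℝ → ℝ) (ε : ℝ) (ρ w ρh wh eh1 eh2 : ℝ → ℝ),
        Continuous a → Continuous z → Continuous γ →
        Continuous ρ → Continuous w → Continuous ρh → Continuous wh →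
        Continuous eh1 → Continuous eh2 →
        (∀ x, alo ≤ a x ∧ a x ≤ ahi) → (∀ x, |g * z x| ≤ gzbar) →
        (∀ x, γlo ≤ γ x ∧ γ x ≤ γhi) →
        0 ≤ ε → ε ≤ εbar →
        (∀ x ∈ Set.Icc (0:ℝ) ℓ,
          rlo ≤ ρ x ∧ ρ x ≤ rhi ∧ rlo ≤ ρh x ∧ ρh x ≤ rhi
            ∧ |w x| ≤ wbar ∧ |wh x| ≤ wbar) →
        (∫ x in (0:ℝ)..ℓ,
            eh1 x * (ε ^ 2 * ((w x) ^ 2 - (wh x) ^ 2) / 2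
                + deriv P (ρ x) - deriv P (ρh x)))
          + (∫ x in (0:ℝ)..ℓ, eh2 x * (a x * (ρ x * w x - ρh x * wh x)))
          ≤ relEnergy ℓ g ε a z P ρ w ρh wh + relDissipation ℓ γ a ρh w wh
            + C1 * (∫ x in (0:ℝ)..ℓ, (eh1 x) ^ 2)
            + C2 * (∫ x in (0:ℝ)..ℓ, (eh2 x) ^ 2)
            + C3 * (∫ x in (0:ℝ)..ℓ, |eh2 x| ^ ((3:ℝ) / 2)) := by
  have hP2c : Continuous (deriv (deriv P)) := by
    have h : ContDiff ℝ (⊤ : ℕ∞) (deriv P) := ((contDiff_infty_iff_deriv).1 hP).2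
    exact ((contDiff_infty_iff_deriv).1 h).2.continuous
  have hP1d : Differentiable ℝ (deriv P) := by
    have h : ContDiff ℝ (⊤ : ℕ∞) (deriv P) := ((contDiff_infty_iff_deriv).1 hP).2
    exact h.differentiable (by simp)
  have hP1c : Continuous (deriv P) := hP1d.continuous
  have hP0c : Continuous P := hP.continuous
  obtain ⟨M, hM⟩ := (isCompact_Icc (a := rlo) (b := rhi)).exists_bound_of_continuousOn
    hP2c.continuousOn
  have hM0 : 0 ≤ M := (norm_nonneg _).trans (hM rlo ⟨le_rfl, hrr⟩)
  have hLip : ∀ r ∈ Set.Icc rlo rhi, ∀ s ∈ Set.Icc rlo rhi,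
      |deriv P r - deriv P s| ≤ M * |r - s| := fun r hr s hs =>
    (convex_Icc rlo rhi).norm_image_sub_le_of_norm_deriv_le (fun x _ => hP1d x) hM hs hr
  obtain ⟨m, hm⟩ : ∃ m, m = 4 * εbar ^ 2 * wbar ^ 2 / rhi := ⟨_, rfl⟩
  have hrhi : 0 < rhi := by linarith
  have hahi : 0 < ahi := by linarith
  have hm0 : 0 < m := by rw [hm]; positivity
  have hc1 : 0 < alo * m / 8 := by positivity
  have hc2 : 0 < alo * rlo / 4 := by positivity
  have hk : 0 < γlo / 16 := by positivity
  refine ⟨M ^ 2 / (4 * (alo * m / 8)) + (εbar * wbar) ^ 2 / (4 * (alo * rlo / 4)),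
    (ahi * wbar) ^ 2 / (4 * (alo * m / 8)), ahi * rhi * (1 / √(γlo / 16)),
    by positivity, by positivity, by positivity, ?_⟩
  intro a z γ ε ρ w ρh wh eh1 eh2 ca cz cγ cρ cw cρh cwh ce1 ce2 ha _ hγ hε hε' hadm
  have hpt : ∀ (A Z G r v s u e1 e2 : ℝ), alo ≤ A → A ≤ ahi → γlo ≤ G →
      rlo ≤ r → r ≤ rhi → rlo ≤ s → s ≤ rhi → |v| ≤ wbar → |u| ≤ wbar →
      e1 * (ε ^ 2 * (v ^ 2 - u ^ 2) / 2 + deriv P r - deriv P s)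
        + e2 * (A * (r * v - s * u)) ≤
      (A * (ε ^ 2 * r * v ^ 2 / 2 + P r + g * Z * r)
        - A * (ε ^ 2 * s * u ^ 2 / 2 + P s + g * Z * s)
        - (A * (ε ^ 2 * u ^ 2 / 2 + deriv P s + g * Z) * (r - s)
          + A * ε ^ 2 * s * u * (v - u)))
      + (1 / 16) * (G * A * s * (|v| + |u|) * (v - u) ^ 2)
      + (M ^ 2 / (4 * (alo * m / 8)) + (εbar * wbar) ^ 2 / (4 * (alo * rlo / 4))) * e1 ^ 2
      + (ahi * wbar) ^ 2 / (4 * (alo * m / 8)) * e2 ^ 2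
      + ahi * rhi * (1 / √(γlo / 16)) * |e2| ^ ((3:ℝ) / 2) := by
    intro A Z G r v s u e1 e2 hA hA' hG hr hr' hs hs' hv hu
    have E := energy_lower P hP rlo rhi wbar εbar hrlo hrr hwbar hεbar hA1 ε r s v u hε hε'
      ⟨hr, hr'⟩ ⟨hs, hs'⟩ hv hu
    rw [← hm] at E
    have hA0 : 0 < A := by linarith
    have hs0 : 0 < s := by linarith
    have E2 : alo * ((m * (r - s) ^ 2 + ε ^ 2 * rlo * (v - u) ^ 2) / 4) ≤
        A * (ε ^ 2 * r * v ^ 2 / 2 + P r - (ε ^ 2 * s * u ^ 2 / 2 + P s)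
       - ((ε ^ 2 * u ^ 2 / 2 + deriv P s) * (r - s) + ε ^ 2 * s * u * (v - u))) :=
      mul_le_mul hA E (by positivity) hA0.le
    have Y1 := young2 (alo * m / 8) M |e1| |r - s| hc1
    have Y2 := young2 (alo * rlo / 4) (εbar * wbar) |e1| (ε * |v - u|) hc2
    have Y3 := young2 (alo * m / 8) (ahi * wbar) |e2| |r - s| hc1
    have Y4 := young_aux (γlo / 16) |e2| |v - u| hk (abs_nonneg _) (abs_nonneg _)
    rw [sq_abs, sq_abs] at Y1 Y3
    rw [mul_pow ε, sq_abs, sq_abs] at Y2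
    have T1 : e1 * (deriv P r - deriv P s) ≤ M * (|e1| * |r - s|) := by
      calc _ ≤ |e1 * (deriv P r - deriv P s)| := le_abs_self _
        _ = |e1| * |deriv P r - deriv P s| := abs_mul _ _
        _ ≤ |e1| * (M * |r - s|) := by gcongr; exact hLip r ⟨hr, hr'⟩ s ⟨hs, hs'⟩
        _ = _ := by ring
    have T2 : e1 * (ε ^ 2 * (v ^ 2 - u ^ 2) / 2) ≤ εbar * wbar * (|e1| * (ε * |v - u|)) := by
      have huv : |v + u| ≤ 2 * wbar := (abs_add_le v u).trans (by linarith)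
      calc _ ≤ |e1 * (ε ^ 2 * (v ^ 2 - u ^ 2) / 2)| := le_abs_self _
        _ = |e1| * (ε * (ε * (|v + u| * |v - u|)) / 2) := by
          rw [← abs_mul (v + u), abs_mul, abs_div, abs_mul, abs_of_nonneg (sq_nonneg ε),
            abs_of_pos (two_pos : (0:ℝ) < 2)]
          ring_nf
        _ ≤ |e1| * (εbar * (ε * ((2 * wbar) * |v - u|)) / 2) := by gcongr
        _ = _ := by ring
    have T3 : e2 * (A * ((r - s) * v)) ≤ ahi * wbar * (|e2| * |r - s|) := by
      calc _ ≤ |e2 * (A * ((r - s) * v))| := le_abs_self _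
        _ = |e2| * (A * (|r - s| * |v|)) := by
          rw [abs_mul, abs_mul, abs_mul, abs_of_pos hA0]
        _ ≤ |e2| * (ahi * (|r - s| * wbar)) := by gcongr
        _ = _ := by ring
    have T4 : e2 * (A * (s * (v - u))) ≤ (1 / 16) * (G * A * s * (|v| + |u|) * (v - u) ^ 2)
        + ahi * rhi * (1 / √(γlo / 16)) * |e2| ^ ((3:ℝ) / 2) := by
      calc _ ≤ |e2 * (A * (s * (v - u)))| := le_abs_self _
        _ = A * s * (|e2| * |v - u|) := by
          rw [abs_mul, abs_mul, abs_mul, abs_of_pos hA0, abs_of_pos hs0]; ring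
        _ ≤ A * s * (γlo / 16 * |v - u| ^ 3 + 1 / √(γlo / 16) * |e2| ^ ((3:ℝ) / 2)) := by
          gcongr
        _ = (1 / 16) * (γlo * A * s * |v - u| * (v - u) ^ 2)
            + A * s * (1 / √(γlo / 16)) * |e2| ^ ((3:ℝ) / 2) := by
          rw [← sq_abs (v - u)]; ring
        _ ≤ _ := by
          have := abs_sub v u
          have hp : 0 ≤ |e2| ^ ((3:ℝ) / 2) := by positivity
          have hG0 : 0 < G := by linarith
          gcongr
    generalize M ^ 2 / (4 * (alo * m / 8)) = K1 at *
    generalize (εbar * wbar) ^ 2 / (4 * (alo * rlo / 4)) = K2 at *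
    generalize (ahi * wbar) ^ 2 / (4 * (alo * m / 8)) = K3 at *
    generalize ahi * rhi * (1 / √(γlo / 16)) * |e2| ^ ((3:ℝ) / 2) = K4 at *
    generalize 1 / 16 * (G * A * s * (|v| + |u|) * (v - u) ^ 2) = K5 at *
    clear E hA1 hadm Y4
    linarith
  unfold relEnergy relDissipation
  have cr : Continuous fun x => |eh2 x| ^ ((3:ℝ) / 2) :=
    ce2.abs.rpow_const (fun _ => Or.inr (by norm_num))
  have cPr := hP0c.comp cρ
  have cPs := hP0c.comp cρh
  have cQr := hP1c.comp cρ
  have cQs := hP1c.comp cρh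
  simp only [Function.comp_def] at cPr cPs cQr cQs
  simp only [← intervalIntegral.integral_const_mul]
  rw [← intervalIntegral.integral_add, ← intervalIntegral.integral_add,
    ← intervalIntegral.integral_add, ← intervalIntegral.integral_add,
    ← intervalIntegral.integral_add]
  · apply intervalIntegral.integral_mono_on hℓ.le
    · exact Continuous.intervalIntegrable (by fun_prop) _ _
    · exact Continuous.intervalIntegrable (by fun_prop) _ _
    · intro x hx
      obtain ⟨h1, h2, h3, h4, h5, h6⟩ := hadm x hx
      exact hpt _ _ _ _ _ _ _ _ _ (ha x).1 (ha x).2 (hγ x).1 h1 h2 h3 h4 h5 h6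
  all_goals exact Continuous.intervalIntegrable (by fun_prop) _ _
end

section
/- Let assumptions (A1)–(A2) hold and let (ρ,w) and (ρ̂,ŵ) be classical solutions of the rescaled barotropic gas flow system on (0,ℓ) with parameters ε, γ and ε̂, γ̂ respectively, with (ρ̂,ŵ) Lipschitz continuous. Then there exist constants ĉ, Ĉ > 0, depending only on the bounds in (A1)–(A2) and the Lipschitz bounds of (ρ̂,ŵ), such that for all τ ∈ [0,T]: ‖ρ(τ) − ρ̂(τ)‖²_{L²(0,ℓ)} + ε²‖w(τ) − ŵ(τ)‖²_{L²(0,ℓ)} + ∫₀^τ ‖w(s) − ŵ(s)‖³_{L³(0,ℓ)} ds ≤ Ĉ e^{ĉτ} (‖ρ(0) − ρ̂(0)‖²_{L²(0,ℓ)} + ε²‖w(0) − ŵ(0)‖²_{L²(0,ℓ)} + |γ − γ̂|^{3/2} + |ε² − ε̂²| + ∫₀^τ |h_∂(s) − ĥ_∂(s)|_∂ ds), where h_∂ and ĥ_∂ are the boundary traces at {0,ℓ} of the total specific enthalpies ε²w²/2 + P'(ρ) + gz and ε̂²ŵ²/2 + P'(ρ̂) + gz. -/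
lemma sp_hasDerivAt_fst {f : ℝ → ℝ → ℝ} (hf : ContDiff ℝ 1 (Function.uncurry f)) (s x : ℝ) :
    HasDerivAt (fun t => f t x) (deriv (fun t => f t x) s) s := by
  have h : ContDiff ℝ 1 (fun t => f t x) :=
    hf.comp (contDiff_id.prodMk contDiff_const : ContDiff ℝ 1 (fun t : ℝ => (t, x)))
  exact (h.differentiable one_ne_zero s).hasDerivAt

lemma sp_hasDerivAt_snd {f : ℝ → ℝ → ℝ} (hf : ContDiff ℝ 1 (Function.uncurry f)) (s x : ℝ) :
    HasDerivAt (fun y => f s y) (deriv (fun y => f s y) x) x := by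
  have h : ContDiff ℝ 1 (fun y => f s y) :=
    hf.comp (contDiff_const.prodMk contDiff_id : ContDiff ℝ 1 (fun y : ℝ => (s, y)))
  exact (h.differentiable one_ne_zero x).hasDerivAt

lemma sp_cont_deriv_fst {f : ℝ → ℝ → ℝ} (hf : ContDiff ℝ 1 (Function.uncurry f)) :
    Continuous (fun p : ℝ × ℝ => deriv (fun t => f t p.2) p.1) := by
  have h : ∀ p : ℝ × ℝ, deriv (fun t => f t p.2) p.1
      = fderiv ℝ (Function.uncurry f) p (1, 0) := by
    rintro ⟨s, x⟩
    have h1 := (hf.differentiable one_ne_zero (s, x)).hasFDerivAt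
    have h2 : HasDerivAt (fun t : ℝ => (t, x)) ((1 : ℝ), (0 : ℝ)) s :=
      (hasDerivAt_id s).prodMk (hasDerivAt_const s x)
    exact (h1.comp_hasDerivAt s h2).deriv
  simp_rw [h]
  exact (hf.continuous_fderiv one_ne_zero).clm_apply continuous_const

lemma sp_cont_deriv_snd {f : ℝ → ℝ → ℝ} (hf : ContDiff ℝ 1 (Function.uncurry f)) :
    Continuous (fun p : ℝ × ℝ => deriv (fun y => f p.1 y) p.2) := by
  have h : ∀ p : ℝ × ℝ, deriv (fun y => f p.1 y) p.2
      = fderiv ℝ (Function.uncurry f) p (0, 1) := by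
    rintro ⟨s, x⟩
    have h1 := (hf.differentiable one_ne_zero (s, x)).hasFDerivAt
    have h2 : HasDerivAt (fun y : ℝ => (s, y)) ((0 : ℝ), (1 : ℝ)) x :=
      (hasDerivAt_const x s).prodMk (hasDerivAt_id x)
    exact (h1.comp_hasDerivAt x h2).deriv
  simp_rw [h]
  exact (hf.continuous_fderiv one_ne_zero).clm_apply continuous_const

lemma sp_cont_snd {f : ℝ × ℝ → ℝ} (hf : Continuous f) (s : ℝ) : Continuous (fun x => f (s, x)) :=
  hf.comp (by fun_prop)

lemma sp_cont_fst {f : ℝ × ℝ → ℝ} (hf : Continuous f) (x : ℝ) : Continuous (fun s => f (s, x)) :=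
  hf.comp (by fun_prop)

lemma sp_cont_int {f : ℝ × ℝ → ℝ} (hf : Continuous f) (ℓ : ℝ) :
    Continuous (fun s => ∫ x in (0:ℝ)..ℓ, f (s, x)) :=
  intervalIntegral.continuous_parametric_intervalIntegral_of_continuous' (f := fun s x => f (s, x))
    hf 0 ℓ

lemma sp_energy (e F V : ℝ → ℝ → ℝ) (Bd : ℝ → ℝ) (c κ b ℓ τ : ℝ)
    (he : ContDiff ℝ 1 (Function.uncurry e)) (hF : ContDiff ℝ 1 (Function.uncurry F))
    (hV : Continuous (Function.uncurry V)) (hBd : Continuous Bd)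
    (hc : 0 ≤ c) (hκ : 0 ≤ κ) (hb : 0 ≤ b) (hℓ : 0 ≤ ℓ) (hτ : 0 ≤ τ)
    (hV0 : ∀ s x, 0 ≤ V s x)
    (hpt : ∀ s ∈ Set.Icc 0 τ, ∀ x ∈ Set.Icc 0 ℓ,
      deriv (fun t => e t x) s + deriv (fun y => F s y) x ≤ c * e s x - κ * V s x + b)
    (hbd : ∀ s ∈ Set.Icc 0 τ, |F s 0| + |F s ℓ| ≤ Bd s) :
    (∫ x in (0:ℝ)..ℓ, e τ x) + κ * (∫ s in (0:ℝ)..τ, ∫ x in (0:ℝ)..ℓ, V s x)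
      ≤ Real.exp (c * τ) * ((∫ x in (0:ℝ)..ℓ, e 0 x) + τ * (ℓ * b) + ∫ s in (0:ℝ)..τ, Bd s) := by
  have hec : Continuous (fun p : ℝ × ℝ => e p.1 p.2) := he.continuous
  have hFc : Continuous (fun p : ℝ × ℝ => F p.1 p.2) := hF.continuous
  have hVc : Continuous (fun p : ℝ × ℝ => V p.1 p.2) := hV
  have het := sp_cont_deriv_fst he
  have hFx := sp_cont_deriv_snd hF
  set es : ℝ → ℝ → ℝ := fun s x => deriv (fun t => e t x) s with hes
  set G : ℝ × ℝ → ℝ := fun p => Real.exp (-c * p.1) * (es p.1 p.2 - c * e p.1 p.2) with hG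
  have hGc : Continuous G := by
    have : Continuous (fun p : ℝ × ℝ => es p.1 p.2) := het
    simp only [hG]; fun_prop
  -- fundamental theorem in time
  have hft : ∀ x, ∫ s in (0:ℝ)..τ, G (s, x) = Real.exp (-c * τ) * e τ x - e 0 x := by
    intro x
    have hd : ∀ s ∈ Set.uIcc 0 τ, HasDerivAt (fun s => Real.exp (-c * s) * e s x) (G (s, x)) s := by
      intro s _
      have h1 := sp_hasDerivAt_fst he s x
      have h2 : HasDerivAt (fun s : ℝ => Real.exp (-c * s)) (Real.exp (-c * s) * (-c)) s := by
        have := ((hasDerivAt_id s).const_mul (-c)).exp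
        simpa using this
      refine (h2.mul h1).congr_deriv ?_
      simp only [hG, hes]; ring
    rw [intervalIntegral.integral_eq_sub_of_hasDerivAt hd
      ((sp_cont_fst hGc x).intervalIntegrable _ _)]
    simp
  have hswap : ∫ x in (0:ℝ)..ℓ, ∫ s in (0:ℝ)..τ, G (s, x)
      = ∫ s in (0:ℝ)..τ, ∫ x in (0:ℝ)..ℓ, G (s, x) := by
    apply MeasureTheory.intervalIntegral_intervalIntegral_swap
    have hc : Continuous (Function.uncurry fun x s => G (s, x)) :=
      hGc.comp continuous_swap
    have hK : IsCompact (Set.uIcc 0 ℓ ×ˢ Set.uIcc 0 τ) := isCompact_uIcc.prod isCompact_uIcc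
    exact (hc.continuousOn.integrableOn_compact hK).mono_set
      (Set.prod_mono Set.uIoc_subset_uIcc Set.uIoc_subset_uIcc)
  have hleft : ∫ x in (0:ℝ)..ℓ, ∫ s in (0:ℝ)..τ, G (s, x)
      = Real.exp (-c * τ) * (∫ x in (0:ℝ)..ℓ, e τ x) - ∫ x in (0:ℝ)..ℓ, e 0 x := by
    simp_rw [hft]
    rw [intervalIntegral.integral_sub, intervalIntegral.integral_const_mul]
    · exact (continuous_const.mul (sp_cont_snd hec τ)).intervalIntegrable _ _
    · exact (sp_cont_snd hec 0).intervalIntegrable _ _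
  have hin : ∀ s ∈ Set.Icc 0 τ, ∫ x in (0:ℝ)..ℓ, G (s, x)
      ≤ (ℓ * b + Bd s) - Real.exp (-c * τ) * κ * ∫ x in (0:ℝ)..ℓ, V s x := by
    intro s hs
    have hI : ∫ x in (0:ℝ)..ℓ, G (s, x)
        ≤ ∫ x in (0:ℝ)..ℓ, Real.exp (-c * s) * (b - κ * V s x - deriv (fun y => F s y) x) := by
      apply intervalIntegral.integral_mono_on hℓ
      · exact (sp_cont_snd hGc s).intervalIntegrable _ _
      · apply Continuous.intervalIntegrable
        have h1 := sp_cont_snd hVc s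
        have h2 := sp_cont_snd hFx s
        simp only at h1 h2
        fun_prop
      · intro x hx
        have := hpt s hs x hx
        simp only [hG]
        apply mul_le_mul_of_nonneg_left _ (Real.exp_pos _).le
        simp only [hes]; linarith
    have hFt : ∫ x in (0:ℝ)..ℓ, deriv (fun y => F s y) x = F s ℓ - F s 0 :=
      intervalIntegral.integral_eq_sub_of_hasDerivAt (fun x _ => sp_hasDerivAt_snd hF s x)
        ((sp_cont_snd hFx s).intervalIntegrable _ _)
    have hcomp : ∫ x in (0:ℝ)..ℓ, Real.exp (-c * s) * (b - κ * V s x - deriv (fun y => F s y) x)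
        = Real.exp (-c * s) * (ℓ * b - κ * (∫ x in (0:ℝ)..ℓ, V s x) - (F s ℓ - F s 0)) := by
      rw [intervalIntegral.integral_const_mul, intervalIntegral.integral_sub,
        intervalIntegral.integral_sub, intervalIntegral.integral_const_mul, hFt]
      · simp
      · exact intervalIntegrable_const
      · exact (continuous_const.mul (sp_cont_snd hVc s)).intervalIntegrable _ _
      · exact (continuous_const.sub
          (continuous_const.mul (sp_cont_snd hVc s))).intervalIntegrable _ _
      · exact (sp_cont_snd hFx s).intervalIntegrable _ _
    rw [hcomp] at hI
    have hVi : 0 ≤ ∫ x in (0:ℝ)..ℓ, V s x :=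
      intervalIntegral.integral_nonneg hℓ (fun x _ => hV0 s x)
    have hB := hbd s hs
    have h1 : Real.exp (-c * s) ≤ 1 := by
      rw [Real.exp_le_one_iff]; nlinarith [hs.1]
    have h2 : Real.exp (-c * τ) ≤ Real.exp (-c * s) := by
      apply Real.exp_le_exp.mpr; nlinarith [hs.2]
    have h3 : -(F s ℓ - F s 0) ≤ Bd s := by
      have := abs_le.mp (le_refl |F s 0|)
      have := abs_le.mp (le_refl |F s ℓ|)
      linarith
    have h4 : 0 ≤ Bd s := le_trans (by positivity) hB
    have h5 : Real.exp (-c * s) * (ℓ * b + Bd s) ≤ ℓ * b + Bd s :=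
      mul_le_of_le_one_left (by positivity) h1
    have h6 : Real.exp (-c * τ) * (κ * ∫ x in (0:ℝ)..ℓ, V s x)
        ≤ Real.exp (-c * s) * (κ * ∫ x in (0:ℝ)..ℓ, V s x) :=
      mul_le_mul_of_nonneg_right h2 (by positivity)
    have h7 : Real.exp (-c * s) * (-(F s ℓ - F s 0)) ≤ Real.exp (-c * s) * Bd s :=
      mul_le_mul_of_nonneg_left h3 (Real.exp_pos _).le
    nlinarith
  have hVint := sp_cont_int hVc ℓ
  simp only at hVint
  have hmain : ∫ s in (0:ℝ)..τ, ∫ x in (0:ℝ)..ℓ, G (s, x)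
      ≤ (τ * (ℓ * b) + ∫ s in (0:ℝ)..τ, Bd s)
        - Real.exp (-c * τ) * κ * ∫ s in (0:ℝ)..τ, ∫ x in (0:ℝ)..ℓ, V s x := by
    have : ∫ s in (0:ℝ)..τ, ((ℓ * b + Bd s) - Real.exp (-c * τ) * κ * ∫ x in (0:ℝ)..ℓ, V s x)
        = (τ * (ℓ * b) + ∫ s in (0:ℝ)..τ, Bd s)
        - Real.exp (-c * τ) * κ * ∫ s in (0:ℝ)..τ, ∫ x in (0:ℝ)..ℓ, V s x := by
      rw [intervalIntegral.integral_sub, intervalIntegral.integral_add,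
        intervalIntegral.integral_const_mul]
      · simp
        ring
      · exact intervalIntegrable_const
      · exact hBd.intervalIntegrable _ _
      · exact (continuous_const.add hBd).intervalIntegrable _ _
      · exact (continuous_const.mul hVint).intervalIntegrable _ _
    rw [← this]
    apply intervalIntegral.integral_mono_on hτ
    · exact (sp_cont_int hGc ℓ).intervalIntegrable _ _
    · exact ((continuous_const.add hBd).sub (continuous_const.mul hVint)).intervalIntegrable _ _
    · exact hin
  rw [← hswap, hleft] at hmain
  have hE : Real.exp (c * τ) * Real.exp (-c * τ) = 1 := by
    rw [← Real.exp_add]; simp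
  have := mul_le_mul_of_nonneg_left hmain (Real.exp_pos (c * τ)).le
  have e1 : Real.exp (c * τ) * (Real.exp (-c * τ) * (∫ x in (0:ℝ)..ℓ, e τ x) - ∫ x in (0:ℝ)..ℓ, e 0 x)
    = (∫ x in (0:ℝ)..ℓ, e τ x) - Real.exp (c * τ) * ∫ x in (0:ℝ)..ℓ, e 0 x := by
    linear_combination (∫ x in (0:ℝ)..ℓ, e τ x) * hE
  have e2 : Real.exp (c * τ) * ((τ * (ℓ * b) + ∫ s in (0:ℝ)..τ, Bd s)
        - Real.exp (-c * τ) * κ * ∫ s in (0:ℝ)..τ, ∫ x in (0:ℝ)..ℓ, V s x)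
      = Real.exp (c * τ) * (τ * (ℓ * b) + ∫ s in (0:ℝ)..τ, Bd s)
        - κ * ∫ s in (0:ℝ)..τ, ∫ x in (0:ℝ)..ℓ, V s x := by
    linear_combination (-(κ * ∫ s in (0:ℝ)..τ, ∫ x in (0:ℝ)..ℓ, V s x)) * hE
  rw [e1, e2] at this
  linarith

/-- second order Taylor inequality on the unit interval -/
lemma sp_taylor {φ φ' φ'' : ℝ → ℝ} (h1 : ∀ s, HasDerivAt φ (φ' s) s)
    (h2 : ∀ s, HasDerivAt φ' (φ'' s) s) (h0 : ∀ s ∈ Set.Icc (0:ℝ) 1, 0 ≤ φ'' s) :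
    φ 0 + φ' 0 ≤ φ 1 := by
  have hm : MonotoneOn φ' (Set.Icc (0:ℝ) 1) := by
    apply monotoneOn_of_deriv_nonneg (convex_Icc 0 1)
    · exact fun s _ => (h2 s).continuousAt.continuousWithinAt
    · exact fun s _ => (h2 s).differentiableAt.differentiableWithinAt
    · intro s hs
      rw [interior_Icc] at hs
      rw [(h2 s).deriv]; exact h0 s ⟨hs.1.le, hs.2.le⟩
  have hd : ∀ s, HasDerivAt (fun s => φ s - φ' 0 * s) (φ' s - φ' 0) s := by
    intro s
    exact ((h1 s).sub ((hasDerivAt_id s).const_mul (φ' 0))).congr_deriv (by simp)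
  have hm2 : MonotoneOn (fun s => φ s - φ' 0 * s) (Set.Icc (0:ℝ) 1) := by
    apply monotoneOn_of_deriv_nonneg (convex_Icc 0 1)
    · exact fun s _ => (hd s).continuousAt.continuousWithinAt
    · exact fun s _ => (hd s).differentiableAt.differentiableWithinAt
    · intro s hs
      rw [interior_Icc] at hs
      rw [(hd s).deriv]
      have := hm (by simp) ⟨hs.1.le, hs.2.le⟩ hs.1.le
      linarith
  have := hm2 (a := 0) (b := 1) (by simp) (by simp) zero_le_one
  simp at this
  linarith

section
variable {P : ℝ → ℝ}

lemma sp_P1 (hP : ContDiff ℝ (⊤ : ℕ∞) P) (x : ℝ) : HasDerivAt P (deriv P x) x :=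
  (hP.differentiable (by simp) x).hasDerivAt

lemma sp_dP (hP : ContDiff ℝ (⊤ : ℕ∞) P) : ContDiff ℝ (⊤ : ℕ∞) (deriv P) := by
  have := (contDiff_infty_iff_deriv (f := P)).mp hP
  exact this.2

lemma sp_line (x r s : ℝ) : HasDerivAt (fun s => x + s * r) r s := by
  simpa using ((hasDerivAt_id s).mul_const r).const_add x

lemma sp_seg {x y lo hi s : ℝ} (hx : x ∈ Set.Icc lo hi) (hy : y ∈ Set.Icc lo hi)
    (hs : s ∈ Set.Icc (0:ℝ) 1) : x + s * (y - x) ∈ Set.Icc lo hi := by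
  obtain ⟨h1, h2⟩ := hx
  obtain ⟨h3, h4⟩ := hy
  obtain ⟨h5, h6⟩ := hs
  constructor <;> nlinarith

/-- coercivity of the relative energy -/
lemma sp_coercive (hP : ContDiff ℝ (⊤ : ℕ∞) P) {rlo rhi wbar εbar ε c : ℝ} (hrlo : 0 < rlo)
    (hA1 : ∀ r ∈ Set.Icc rlo rhi, 4 * εbar ^ 2 * wbar ^ 2 ≤ r * deriv (deriv P) r)
    (hε : 0 ≤ ε) (hεb : ε ≤ εbar) (hw0 : 0 < wbar)
    (hc1 : ∀ r ∈ Set.Icc rlo rhi, 4 * c ≤ deriv (deriv P) r) (hc2 : 4 * c ≤ rlo)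
    {ρ w ρh wh : ℝ} (hρ : ρ ∈ Set.Icc rlo rhi) (hρh : ρh ∈ Set.Icc rlo rhi)
    (hw : |w| ≤ wbar) (hwh : |wh| ≤ wbar) :
    c * ((ρ - ρh) ^ 2 + ε ^ 2 * (w - wh) ^ 2) ≤
      P ρ - P ρh - deriv P ρh * (ρ - ρh)
        + ε ^ 2 * (ρ * (w - wh) ^ 2 / 2 + (ρ - ρh) * wh * (w - wh)) := by
  set r := ρ - ρh with hr
  set v := w - wh with hv
  set N := r ^ 2 + ε ^ 2 * v ^ 2 with hN
  have key := sp_taylor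
    (φ := fun s => P (ρh + s * r) + ε ^ 2 * ((ρh + s * r) * (wh + s * v) ^ 2 / 2) - c * N * s ^ 2)
    (φ' := fun s => deriv P (ρh + s * r) * r
      + ε ^ 2 * ((r * (wh + s * v) ^ 2 + (ρh + s * r) * (2 * (wh + s * v) * v)) / 2) - c * N * (2 * s))
    (φ'' := fun s => deriv (deriv P) (ρh + s * r) * r * r
      + ε ^ 2 * ((r * (2 * (wh + s * v) * v) + (r * (2 * (wh + s * v) * v)
        + (ρh + s * r) * (2 * v * v))) / 2) - c * N * 2) ?_ ?_ ?_
  · simp only [zero_mul, add_zero, one_mul] at key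
    have e1 : ρh + r = ρ := by rw [hr]; ring
    have e2 : wh + v = w := by rw [hv]; ring
    rw [e1, e2] at key
    have : ρ = ρh + r := e1.symm
    have h3 : w = wh + v := e2.symm
    rw [h3, show ε ^ 2 * (ρ * (wh + v) ^ 2 / 2) = ε ^ 2 * ((ρh + r) * (wh + v) ^ 2 / 2) by rw [e1]] at key
    rw [show ε ^ 2 * (ρ * v ^ 2 / 2 + r * wh * v) = ε ^ 2 * ((ρh + r) * v ^ 2 / 2 + r * wh * v) by rw [e1]]
    nlinarith
  · intro s
    have h1 := ((sp_P1 hP (ρh + s * r)).comp s (sp_line ρh r s))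
    have h2 := ((sp_line ρh r s).mul ((sp_line wh v s).pow 2)).div_const 2 |>.const_mul (ε ^ 2)
    have h3 := ((hasDerivAt_id s).pow 2).const_mul (c * N)
    refine ((h1.add h2).sub h3).congr_deriv ?_
    simp
  · intro s
    have h1 := ((sp_P1 (sp_dP hP) (ρh + s * r)).comp s (sp_line ρh r s)).mul_const r
    have h2 := ((((sp_line wh v s).pow 2).const_mul r).add ((sp_line ρh r s).mul
      (((sp_line wh v s).const_mul 2).mul_const v))).div_const 2 |>.const_mul (ε ^ 2)
    have h3 := ((hasDerivAt_id s).const_mul 2).const_mul (c * N)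
    refine ((h1.add h2).sub h3).congr_deriv ?_
    simp
  · intro s hs
    have hρs := sp_seg hρh hρ hs
    have hws := sp_seg (lo := -wbar) (hi := wbar) (abs_le.mp hwh) (abs_le.mp hw) hs
    rw [← hr] at hρs
    rw [← hv] at hws
    have hA := hA1 _ hρs
    have hC := hc1 _ hρs
    set R := ρh + s * r
    set W := wh + s * v
    set p := deriv (deriv P) R
    have hR : 0 < R := lt_of_lt_of_le hrlo hρs.1
    have hW2 : W ^ 2 ≤ wbar ^ 2 := by
      apply sq_le_sq'; exact hws.1; exact hws.2
    have hε2 : ε ^ 2 ≤ εbar ^ 2 := by gcongr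
    -- ε² W² ≤ εbar² wbar²
    have hEW : 4 * (ε ^ 2 * W ^ 2) ≤ R * p := by
      have : ε ^ 2 * W ^ 2 ≤ εbar ^ 2 * wbar ^ 2 := by gcongr
      linarith
    have hY : 0 ≤ R * (p * r ^ 2 / 2 + 2 * ε ^ 2 * W * r * v + ε ^ 2 * R * v ^ 2 / 2) := by
      nlinarith [mul_nonneg (sq_nonneg ε) (sq_nonneg (2 * W * r + R * v)), mul_le_mul_of_nonneg_right hEW (sq_nonneg r)]
    have hY2 : 0 ≤ p * r ^ 2 / 2 + 2 * ε ^ 2 * W * r * v + ε ^ 2 * R * v ^ 2 / 2 := by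
      by_contra hneg
      push Not at hneg
      nlinarith
    have hz1 : 4 * c * r ^ 2 ≤ p * r ^ 2 := by gcongr
    have hz2 : 4 * c * (ε ^ 2 * v ^ 2) ≤ R * (ε ^ 2 * v ^ 2) := by
      gcongr; exact hc2.trans hρs.1
    rw [hN]
    nlinarith

/-- first order Taylor remainder bound -/
lemma sp_lip {f : ℝ → ℝ} (hf : Differentiable ℝ f) {lo hi L : ℝ}
    (hL : ∀ r ∈ Set.Icc lo hi, |deriv f r| ≤ L) {x y : ℝ} (hx : x ∈ Set.Icc lo hi)
    (hy : y ∈ Set.Icc lo hi) : |f y - f x| ≤ L * |y - x| := by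
  have := (convex_Icc lo hi).norm_image_sub_le_of_norm_deriv_le (f := f) (C := L)
    (fun z _ => hf z) (fun z hz => hL z hz) hx hy
  simpa using this

lemma sp_taylor_bd {f : ℝ → ℝ} (hf : ContDiff ℝ 2 f) {lo hi L : ℝ}
    (hL : ∀ r ∈ Set.Icc lo hi, |deriv (deriv f) r| ≤ L) {x y : ℝ} (hx : x ∈ Set.Icc lo hi)
    (hy : y ∈ Set.Icc lo hi) : |f y - f x - deriv f x * (y - x)| ≤ L * (y - x) ^ 2 := by
  have hd1 : ∀ z, HasDerivAt f (deriv f z) z :=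
    fun z => (hf.differentiable (by simp) z).hasDerivAt
  have hcd : ContDiff ℝ 1 (deriv f) := by
    have h2 : ContDiff ℝ (1 + 1) f := by simpa [one_add_one_eq_two] using hf
    exact (contDiff_succ_iff_deriv.mp h2).2.2
  have hd2 : ∀ z, HasDerivAt (deriv f) (deriv (deriv f) z) z :=
    fun z => (hcd.differentiable (by simp) z).hasDerivAt
  have hL0 : 0 ≤ L := (abs_nonneg _).trans (hL x hx)
  have hg : ∀ σ : ℝ, |σ| = 1 → σ * (f y - f x - deriv f x * (y - x)) ≤ L * (y - x) ^ 2 := by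
    intro σ hσ
    have key := sp_taylor
      (φ := fun s => L * (y - x) ^ 2 * s ^ 2 - σ * f (x + s * (y - x)))
      (φ' := fun s => L * (y - x) ^ 2 * (2 * s) - σ * (deriv f (x + s * (y - x)) * (y - x)))
      (φ'' := fun s => L * (y - x) ^ 2 * 2
        - σ * (deriv (deriv f) (x + s * (y - x)) * (y - x) * (y - x))) ?_ ?_ ?_
    · simp at key
      nlinarith
    · intro s
      have h1 := ((hd1 (x + s * (y - x))).comp s (sp_line x (y - x) s)).const_mul σ
      have h3 := ((hasDerivAt_id s).pow 2).const_mul (L * (y - x) ^ 2)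
      refine (h3.sub h1).congr_deriv ?_
      simp
    · intro s
      have h1 := (((hd2 (x + s * (y - x))).comp s (sp_line x (y - x) s)).mul_const
        (y - x)).const_mul σ
      have h3 := ((hasDerivAt_id s).const_mul 2).const_mul (L * (y - x) ^ 2)
      refine (h3.sub h1).congr_deriv ?_
      simp
    · intro s hs
      have := hL _ (sp_seg hx hy hs)
      have h2 : σ * deriv (deriv f) (x + s * (y - x)) ≤ L := by
        refine (le_abs_self _).trans ?_
        rw [abs_mul, hσ, one_mul]; exact this
      nlinarith [mul_le_mul_of_nonneg_right h2 (sq_nonneg (y - x)), mul_nonneg hL0 (sq_nonneg (y - x))]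
  rw [abs_le]
  have h1 := hg 1 (by simp)
  have h2 := hg (-1) (by simp)
  constructor <;> linarith
end

lemma sp_fric (w wh : ℝ) :
    (|w| + |wh|) * (w - wh) ^ 2 / 2 ≤ (w - wh) * (|w| * w - |wh| * wh) := by
  rcases abs_cases w with ⟨h1, h2⟩ | ⟨h1, h2⟩ <;> rcases abs_cases wh with ⟨h3, h4⟩ | ⟨h3, h4⟩ <;>
    rw [h1, h3]
  · nlinarith [mul_nonneg (add_nonneg h2 h4) (sq_nonneg (w - wh))]
  · have : 0 ≤ w - wh := by linarith
    nlinarith [mul_nonneg this (sq_nonneg (w + wh))]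
  · have : 0 ≤ wh - w := by linarith
    nlinarith [mul_nonneg this (sq_nonneg (w + wh))]
  · have : 0 ≤ -w - wh := by linarith
    nlinarith [mul_nonneg this (sq_nonneg (w - wh))]

lemma sp_fric2 (w wh : ℝ) :
    |(|w| * w - |wh| * wh)| ≤ (|w| + |wh|) * |w - wh| := by
  rcases le_total w wh with h0 | h0 <;>
  [rw [abs_of_nonpos (sub_nonpos.mpr h0)]; rw [abs_of_nonneg (sub_nonneg.mpr h0)]] <;>
  rw [abs_le] <;>
  rcases abs_cases w with ⟨h1, h2⟩ | ⟨h1, h2⟩ <;> rcases abs_cases wh with ⟨h3, h4⟩ | ⟨h3, h4⟩ <;>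
    rw [h1, h3] <;> constructor <;> nlinarith

lemma sp_young {A D q u : ℝ} (hA : 0 ≤ A) (hD : 0 < D) (hq : 0 ≤ q) (hu : 0 ≤ u) :
    A * q ^ 2 * u ≤ D * u ^ 3 / 8 + A * (1 + 8 * A / D) * q ^ 3 := by
  set lam := 1 + 8 * A / D with hl
  have h8 : 0 ≤ 8 * A / D := by positivity
  have hl1 : 1 ≤ lam := by linarith
  rcases le_total u (lam * q) with h | h
  · have : A * q ^ 2 * u ≤ A * q ^ 2 * (lam * q) := by gcongr
    have : 0 ≤ D * u ^ 3 / 8 := by positivity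
    nlinarith
  · have h2 : lam ^ 2 * q ^ 2 ≤ u ^ 2 := by
      rw [← mul_pow]; gcongr
    have h3 : 8 * A ≤ D * lam := by
      rw [hl]; field_simp; linarith
    have h4 : 8 * A ≤ D * lam ^ 2 := by nlinarith
    have h5 : 8 * A * q ^ 2 ≤ D * u ^ 2 := by nlinarith [sq_nonneg q]
    have h6 : 0 ≤ A * lam * q ^ 3 := by positivity
    nlinarith

set_option maxHeartbeats 2000000 in
lemma sp_point {rlo rhi wbar εbar γlo γhi L K : ℝ}
    (hrlo : 0 < rlo) (hrr : rlo ≤ rhi) (hwbar : 0 < wbar) (hεbar : 0 < εbar)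
    (hγlo : 0 < γlo) (hγγ : γlo ≤ γhi) (hL : 0 ≤ L) (hK : 0 ≤ K) :
    ∃ C2 C3 C4 : ℝ, 0 < C2 ∧ 0 ≤ C3 ∧ 0 ≤ C4 ∧
      ∀ ρ w ρh wh ε εh γ γh rt wt wx R : ℝ,
        ρ ∈ Set.Icc rlo rhi → ρh ∈ Set.Icc rlo rhi → |w| ≤ wbar → |wh| ≤ wbar →
        0 ≤ ε → ε ≤ εbar → γlo ≤ γ → γ ≤ γhi → γlo ≤ γh → γh ≤ γhi →
        |rt| ≤ K → |wt| ≤ K → |wx| ≤ K → |R| ≤ L * (ρ - ρh) ^ 2 →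
        R * rt + ε ^ 2 * (w - wh) ^ 2 * rt / 2 + ε ^ 2 * (ρ - ρh) * (w - wh) * wt
          - (ρ * w - ρh * wh) * (γ * |w| * w - γh * |wh| * wh)
          - (ρ * w - ρh * wh) * ((ε ^ 2 - εh ^ 2) * (wt + wh * wx))
        ≤ C2 * ((ρ - ρh) ^ 2 + ε ^ 2 * (w - wh) ^ 2) - (rlo * γlo) / 8 * |w - wh| ^ 3
          + C3 * |γ - γh| ^ ((3:ℝ) / 2) + C4 * |ε ^ 2 - εh ^ 2| := by
  set D := rlo * γlo with hD
  have hDpos : 0 < D := by positivity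
  have hrhi : 0 < rhi := by linarith
  have hγhi : 0 < γhi := by linarith
  set A := rhi * wbar ^ 2 with hA
  have hApos : 0 < A := by positivity
  set B := γhi * wbar with hB
  refine ⟨L * K + K * (1 + εbar ^ 2) + 2 * wbar * (B ^ 2 / D) + 1,
    A * (1 + 8 * A / D) + wbar ^ 6 * (1 + γhi), 2 * rhi * wbar * (K * (1 + wbar)),
    by positivity, by positivity, by positivity, ?_⟩
  intro ρ w ρh wh ε εh γ γh rt wt wx R hρ hρh hw hwh hε hεb hγ1 hγ2 hγh1 hγh2 hrt hwt hwx hR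
  have hρ0 : 0 < ρ := lt_of_lt_of_le hrlo hρ.1
  have hρh0 : 0 < ρh := lt_of_lt_of_le hrlo hρh.1
  set r := ρ - ρh with hr
  set v := w - wh with hv
  set S := |w| + |wh| with hS
  have hS0 : 0 ≤ S := by positivity
  have hS2 : S ≤ 2 * wbar := by linarith
  have hvS : |v| ≤ S := abs_sub w wh
  have hε2 : ε ^ 2 ≤ εbar ^ 2 := by gcongr
  -- (i)
  have i1 : R * rt ≤ L * K * r ^ 2 := by
    calc R * rt ≤ |R| * |rt| := by rw [← abs_mul]; exact le_abs_self _
      _ ≤ (L * r ^ 2) * K := by gcongr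
      _ = _ := by ring
  have i2 : ε ^ 2 * v ^ 2 * rt / 2 ≤ K / 2 * (ε ^ 2 * v ^ 2) := by
    have : ε ^ 2 * v ^ 2 * rt ≤ ε ^ 2 * v ^ 2 * K := by
      gcongr; exact (le_abs_self _).trans hrt
    linarith
  have i3 : ε ^ 2 * r * v * wt ≤ K * (εbar ^ 2 * r ^ 2 + ε ^ 2 * v ^ 2) / 2 := by
    have h1 : r * v * wt ≤ (r ^ 2 + v ^ 2) / 2 * K := by
      calc r * v * wt ≤ |r * v| * |wt| := by rw [← abs_mul]; exact le_abs_self _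
        _ ≤ (r ^ 2 + v ^ 2) / 2 * K := by
          gcongr
          rw [abs_le]; constructor <;> nlinarith [sq_nonneg (r + v), sq_nonneg (r - v)]
    have h2 : ε ^ 2 * (r * v * wt) ≤ ε ^ 2 * ((r ^ 2 + v ^ 2) / 2 * K) := by gcongr
    have h3 : ε ^ 2 * r ^ 2 * K ≤ εbar ^ 2 * r ^ 2 * K := by gcongr
    linear_combination h2 + h3 / 2
  -- friction
  set q := |w| * w - |wh| * wh with hq
  have hM : ρ * w - ρh * wh = ρ * v + r * wh := by rw [hr, hv]; ring
  have hfr : (ρ * w - ρh * wh) * (γ * |w| * w - γh * |wh| * wh)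
      = ρ * γ * (v * q) + γ * (r * wh * q) + (γ - γh) * (|wh| * wh) * (ρ * v + r * wh) := by
    rw [hM, hq]; ring
  have hq1 : S * v ^ 2 / 2 ≤ v * q := sp_fric w wh
  have hq2 : |q| ≤ S * |v| := sp_fric2 w wh
  have hγ0 : 0 < γ := by linarith
  have ii : D * (S * v ^ 2 / 2) ≤ ρ * γ * (v * q) := by
    have : 0 ≤ S * v ^ 2 / 2 := by positivity
    have h2 : D ≤ ρ * γ := by rw [hD]; exact mul_le_mul hρ.1 hγ1 hγlo.le hρ0.le
    exact mul_le_mul h2 hq1 this (by positivity)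
  have iii : -(γ * (r * wh * q)) ≤ D * (S * v ^ 2) / 4 + 2 * wbar * (B ^ 2 / D) * r ^ 2 := by
    have h1 : -(γ * (r * wh * q)) ≤ γhi * (|r| * wbar * (S * |v|)) := by
      calc -(γ * (r * wh * q)) ≤ |γ * (r * wh * q)| := neg_le_abs _
        _ = γ * (|r| * |wh| * |q|) := by simp [abs_mul, abs_of_pos hγ0]
        _ ≤ _ := by gcongr
    have h2 : B * |r| * |v| ≤ D * v ^ 2 / 4 + B ^ 2 / D * r ^ 2 := by
      have : 0 ≤ (D * |v| / 2 - B * |r|) ^ 2 / D := by positivity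
      have h3 : (D * |v| / 2 - B * |r|) ^ 2 / D
        = D * |v| ^ 2 / 4 + B ^ 2 / D * |r| ^ 2 - B * |r| * |v| := by
        field_simp; ring
      rw [h3, sq_abs, sq_abs] at this
      linarith
    have h4 : S * (B * |r| * |v|) ≤ S * (D * v ^ 2 / 4 + B ^ 2 / D * r ^ 2) := by gcongr
    have h5 : S * (B ^ 2 / D * r ^ 2) ≤ 2 * wbar * (B ^ 2 / D * r ^ 2) := by gcongr
    have h6 : γhi * (|r| * wbar * (S * |v|)) = S * (B * |r| * |v|) := by rw [hB]; ring
    linear_combination h1 + h4 + h5 + h6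
  have hcube : D * |v| ^ 3 / 4 ≤ D * (S * v ^ 2) / 4 := by
    have : |v| ^ 3 ≤ S * v ^ 2 := by
      rw [← sq_abs v, pow_succ, mul_comm]; gcongr
    have := mul_le_mul_of_nonneg_left this hDpos.le
    linarith
  set G := |γ - γh| with hG
  have hG0 : 0 ≤ G := abs_nonneg _
  have hGhi : G ≤ γhi := by rw [hG, abs_le]; constructor <;> linarith
  set k := Real.sqrt G with hk
  have hk0 : 0 ≤ k := Real.sqrt_nonneg _
  have hk2 : k ^ 2 = G := Real.sq_sqrt hG0
  have hk3 : G ^ ((3:ℝ) / 2) = k ^ 3 := by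
    rw [hk, Real.sqrt_eq_rpow, ← Real.rpow_natCast, ← Real.rpow_mul hG0]
    norm_num
  have iv : -((γ - γh) * (|wh| * wh) * (ρ * v + r * wh))
      ≤ D * |v| ^ 3 / 8 + r ^ 2 + (A * (1 + 8 * A / D) + wbar ^ 6 * (1 + γhi)) * k ^ 3 := by
    have h1 : -((γ - γh) * (|wh| * wh) * (ρ * v + r * wh))
        ≤ G * (wbar * wbar) * (rhi * |v| + |r| * wbar) := by
      calc _ ≤ |(γ - γh) * (|wh| * wh) * (ρ * v + r * wh)| := neg_le_abs _
        _ = G * (|wh| * |wh|) * |ρ * v + r * wh| := by simp [abs_mul, hG]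
        _ ≤ G * (|wh| * |wh|) * (ρ * |v| + |r| * |wh|) := by
          gcongr
          refine (abs_add_le _ _).trans ?_
          rw [abs_mul, abs_mul, abs_of_pos hρ0]
        _ ≤ _ := by gcongr; exact hρ.2
    have h2 := sp_young hApos.le hDpos hk0 (abs_nonneg v)
    have h3 : G * (wbar * wbar) * (|r| * wbar) ≤ r ^ 2 + wbar ^ 6 * (k ^ 4) := by
      rw [← hk2, ← sq_abs r]
      have y1 := sq_nonneg (|r| - wbar ^ 3 * k ^ 2 / 2)
      have y2 := sq_nonneg (wbar ^ 3 * k ^ 2)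
      linear_combination y1 + y2 * (3 / 4)
    have h4 : k ≤ 1 + γhi := by nlinarith [sq_nonneg (k - 1)]
    have h5 : wbar ^ 6 * k ^ 4 ≤ wbar ^ 6 * ((1 + γhi) * k ^ 3) := by
      rw [pow_succ' k 3]; gcongr
    have h6 : G * (wbar * wbar) * (rhi * |v|) = A * k ^ 2 * |v| := by rw [hk2, hA]; ring
    linear_combination h1 + h2 + h3 + h5 + h6
  have vv : -((ρ * w - ρh * wh) * ((ε ^ 2 - εh ^ 2) * (wt + wh * wx)))
      ≤ 2 * rhi * wbar * (K * (1 + wbar)) * |ε ^ 2 - εh ^ 2| := by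
    have hMb : |ρ * w - ρh * wh| ≤ 2 * rhi * wbar := by
      refine (abs_sub _ _).trans ?_
      rw [abs_mul, abs_mul, abs_of_pos hρ0, abs_of_pos hρh0]
      have h1 : ρ * |w| ≤ rhi * wbar := by gcongr; exact hρ.2
      have h2 : ρh * |wh| ≤ rhi * wbar := by gcongr; exact hρh.2
      linarith
    have hb : |wt + wh * wx| ≤ K * (1 + wbar) := by
      refine (abs_add_le _ _).trans ?_
      rw [abs_mul]
      have : |wh| * |wx| ≤ wbar * K := by gcongr
      linarith
    calc _ ≤ |(ρ * w - ρh * wh) * ((ε ^ 2 - εh ^ 2) * (wt + wh * wx))| := neg_le_abs _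
      _ = |ρ * w - ρh * wh| * (|ε ^ 2 - εh ^ 2| * |wt + wh * wx|) := by rw [abs_mul, abs_mul]
      _ ≤ 2 * rhi * wbar * (|ε ^ 2 - εh ^ 2| * (K * (1 + wbar))) := by gcongr
      _ = _ := by ring
  rw [hk3, hfr]
  have hx1 : 0 ≤ L * K * (ε ^ 2 * v ^ 2) := by positivity
  have hx2 : 0 ≤ 2 * wbar * (B ^ 2 / D) * (ε ^ 2 * v ^ 2) := by positivity
  have hx3 : 0 ≤ K * εbar ^ 2 * (ε ^ 2 * v ^ 2) := by positivity
  have hx4 : 0 ≤ ε ^ 2 * v ^ 2 := by positivity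
  have hx5 : 0 ≤ K * r ^ 2 := by positivity
  have hx6 : 0 ≤ K * εbar ^ 2 * r ^ 2 := by positivity
  linear_combination i1 + i2 + i3 + ii + iii + hcube + iv + vv + hx1 + hx2 + hx3 + hx4 + hx5 + hx6 / 2

lemma sp_upper {P : ℝ → ℝ} (hP : ContDiff ℝ (⊤ : ℕ∞) P) {rlo rhi wbar εbar ε L : ℝ}
    (hrlo : 0 < rlo)
    (hL : ∀ r ∈ Set.Icc rlo rhi, |deriv (deriv P) r| ≤ L)
    (hε : 0 ≤ ε) (hεb : ε ≤ εbar) (hw0 : 0 < wbar)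
    {ρ w ρh wh : ℝ} (hρ : ρ ∈ Set.Icc rlo rhi) (hρh : ρh ∈ Set.Icc rlo rhi)
    (hwh : |wh| ≤ wbar) :
      P ρ - P ρh - deriv P ρh * (ρ - ρh)
        + ε ^ 2 * (ρ * (w - wh) ^ 2 / 2 + (ρ - ρh) * wh * (w - wh))
      ≤ (L + rhi + wbar * (1 + εbar ^ 2)) * ((ρ - ρh) ^ 2 + ε ^ 2 * (w - wh) ^ 2) := by
  have h1 := (abs_le.mp (sp_taylor_bd (hP.of_le (by norm_cast)) hL hρh hρ)).2
  have hL0 : 0 ≤ L := (abs_nonneg _).trans (hL _ hρ)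
  have hr0 : 0 < rhi := lt_of_lt_of_le hrlo (hρ.1.trans hρ.2)
  set r := ρ - ρh with hr
  set v := w - wh with hv
  have hε2 : ε ^ 2 ≤ εbar ^ 2 := by gcongr
  have h2 : ε ^ 2 * (ρ * v ^ 2) ≤ ε ^ 2 * (rhi * v ^ 2) := by gcongr; exact hρ.2
  have h3 : r * wh * v ≤ wbar * (r ^ 2 + v ^ 2) / 2 := by
    calc r * wh * v = (r * v) * wh := by ring
      _ ≤ |r * v| * |wh| := by rw [← abs_mul]; exact le_abs_self _
      _ ≤ (r ^ 2 + v ^ 2) / 2 * wbar := by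
          gcongr
          rw [abs_le]; constructor <;> nlinarith [sq_nonneg (r + v), sq_nonneg (r - v)]
      _ = _ := by ring
  have h4 : ε ^ 2 * (r * wh * v) ≤ ε ^ 2 * (wbar * (r ^ 2 + v ^ 2) / 2) := by gcongr
  have h5 : ε ^ 2 * (wbar * r ^ 2) ≤ εbar ^ 2 * (wbar * r ^ 2) := by gcongr
  have y1 : 0 ≤ L * (ε ^ 2 * v ^ 2) := by positivity
  have y2 : 0 ≤ rhi * r ^ 2 := by positivity
  have y3 : 0 ≤ rhi * (ε ^ 2 * v ^ 2) := by positivity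
  have y4 : 0 ≤ wbar * r ^ 2 := by positivity
  have y5 : 0 ≤ wbar * (ε ^ 2 * v ^ 2) := by positivity
  have y6 : 0 ≤ wbar * εbar ^ 2 * (ε ^ 2 * v ^ 2) := by positivity
  have y7 : 0 ≤ wbar * εbar ^ 2 * r ^ 2 := by positivity
  linear_combination h1 + h2 / 2 + h4 + h5 / 2 + y1 + y2 + y3 / 2 + y4 + y5 / 2 + y6 + y7 / 2

/-- relative energy density -/
noncomputable def spE (P a : ℝ → ℝ) (ε : ℝ) (ρ w ρh wh : ℝ → ℝ → ℝ) (s x : ℝ) : ℝ :=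
  a x * (P (ρ s x) - P (ρh s x) - deriv P (ρh s x) * (ρ s x - ρh s x)
    + ε ^ 2 * (ρ s x * (w s x - wh s x) ^ 2 / 2
      + (ρ s x - ρh s x) * wh s x * (w s x - wh s x)))

/-- relative energy flux -/
noncomputable def spF (P a z : ℝ → ℝ) (g ε εh : ℝ) (ρ w ρh wh : ℝ → ℝ → ℝ) (s x : ℝ) : ℝ :=
  (a x * ρ s x * w s x - a x * ρh s x * wh s x) *
    ((ε ^ 2 * (w s x) ^ 2 / 2 + deriv P (ρ s x) + g * z x)
      - (εh ^ 2 * (wh s x) ^ 2 / 2 + deriv P (ρh s x) + g * z x)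
      - (ε ^ 2 - εh ^ 2) * (wh s x) ^ 2 / 2)

section
variable {P a z : ℝ → ℝ} {g ε εh γ γh : ℝ} {ρ w ρh wh : ℝ → ℝ → ℝ}

lemma spE_contDiff (hP : ContDiff ℝ (⊤ : ℕ∞) P) (ha : ContDiff ℝ 1 a)
    (hρ : ContDiff ℝ 1 (Function.uncurry ρ)) (hw : ContDiff ℝ 1 (Function.uncurry w))
    (hρh : ContDiff ℝ 1 (Function.uncurry ρh)) (hwh : ContDiff ℝ 1 (Function.uncurry wh)) :
    ContDiff ℝ 1 (Function.uncurry (spE P a ε ρ w ρh wh)) := by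
  have hP1 : ContDiff ℝ 1 P := hP.of_le (by norm_cast)
  have hP2 : ContDiff ℝ 1 (deriv P) := (sp_dP hP).of_le (by norm_cast)
  have h1 : ContDiff ℝ 1 (fun p : ℝ × ℝ => ρ p.1 p.2) := hρ
  have h2 : ContDiff ℝ 1 (fun p : ℝ × ℝ => w p.1 p.2) := hw
  have h3 : ContDiff ℝ 1 (fun p : ℝ × ℝ => ρh p.1 p.2) := hρh
  have h4 : ContDiff ℝ 1 (fun p : ℝ × ℝ => wh p.1 p.2) := hwh
  have h5 := hP1.comp h1
  have h6 := hP1.comp h3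
  have h7 := hP2.comp h3
  have h8 : ContDiff ℝ 1 (fun p : ℝ × ℝ => a p.2) := ha.comp contDiff_snd
  change ContDiff ℝ 1 (fun p : ℝ × ℝ => spE P a ε ρ w ρh wh p.1 p.2)
  unfold spE
  simp only [Function.comp_def] at h5 h6 h7
  fun_prop

lemma spF_contDiff (hP : ContDiff ℝ (⊤ : ℕ∞) P) (ha : ContDiff ℝ 1 a) (hz : ContDiff ℝ 1 z)
    (hρ : ContDiff ℝ 1 (Function.uncurry ρ)) (hw : ContDiff ℝ 1 (Function.uncurry w))
    (hρh : ContDiff ℝ 1 (Function.uncurry ρh)) (hwh : ContDiff ℝ 1 (Function.uncurry wh)) :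
    ContDiff ℝ 1 (Function.uncurry (spF P a z g ε εh ρ w ρh wh)) := by
  have hP2 : ContDiff ℝ 1 (deriv P) := (sp_dP hP).of_le (by norm_cast)
  have h1 : ContDiff ℝ 1 (fun p : ℝ × ℝ => ρ p.1 p.2) := hρ
  have h2 : ContDiff ℝ 1 (fun p : ℝ × ℝ => w p.1 p.2) := hw
  have h3 : ContDiff ℝ 1 (fun p : ℝ × ℝ => ρh p.1 p.2) := hρh
  have h4 : ContDiff ℝ 1 (fun p : ℝ × ℝ => wh p.1 p.2) := hwh
  have h5 := hP2.comp h1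
  have h7 := hP2.comp h3
  have h8 : ContDiff ℝ 1 (fun p : ℝ × ℝ => a p.2) := ha.comp contDiff_snd
  have h9 : ContDiff ℝ 1 (fun p : ℝ × ℝ => z p.2) := hz.comp contDiff_snd
  change ContDiff ℝ 1 (fun p : ℝ × ℝ => spF P a z g ε εh ρ w ρh wh p.1 p.2)
  unfold spF
  simp only [Function.comp_def] at h5 h7
  fun_prop

/-- relative energy balance -/
lemma sp_balance (hP : ContDiff ℝ (⊤ : ℕ∞) P) (ha : ContDiff ℝ 1 a) (hz : ContDiff ℝ 1 z)
    (hρ : ContDiff ℝ 1 (Function.uncurry ρ)) (hw : ContDiff ℝ 1 (Function.uncurry w))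
    (hρh : ContDiff ℝ 1 (Function.uncurry ρh)) (hwh : ContDiff ℝ 1 (Function.uncurry wh))
    (τ x : ℝ)
    (E1 : a x * deriv (fun s => ρ s x) τ + deriv (fun y => a y * ρ τ y * w τ y) x = 0)
    (E2 : ε ^ 2 * deriv (fun s => w s x) τ
            + deriv (fun y => ε ^ 2 * (w τ y) ^ 2 / 2 + deriv P (ρ τ y) + g * z y) x
            + γ * |w τ x| * w τ x = 0)
    (E3 : a x * deriv (fun s => ρh s x) τ + deriv (fun y => a y * ρh τ y * wh τ y) x = 0)
    (E4 : εh ^ 2 * deriv (fun s => wh s x) τ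
            + deriv (fun y => εh ^ 2 * (wh τ y) ^ 2 / 2 + deriv P (ρh τ y) + g * z y) x
            + γh * |wh τ x| * wh τ x = 0) :
    deriv (fun t => spE P a ε ρ w ρh wh t x) τ
      + deriv (fun y => spF P a z g ε εh ρ w ρh wh τ y) x
    = a x * ((deriv P (ρ τ x) - deriv P (ρh τ x) - deriv (deriv P) (ρh τ x) * (ρ τ x - ρh τ x))
          * deriv (fun s => ρh s x) τ
        + ε ^ 2 * (w τ x - wh τ x) ^ 2 * deriv (fun s => ρh s x) τ / 2
        + ε ^ 2 * (ρ τ x - ρh τ x) * (w τ x - wh τ x) * deriv (fun s => wh s x) τ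
        - (ρ τ x * w τ x - ρh τ x * wh τ x) * (γ * |w τ x| * w τ x - γh * |wh τ x| * wh τ x)
        - (ρ τ x * w τ x - ρh τ x * wh τ x) * ((ε ^ 2 - εh ^ 2) *
            (deriv (fun s => wh s x) τ + wh τ x * deriv (fun y => wh τ y) x))) := by
  have r1 := sp_hasDerivAt_fst hρ τ x
  have w1 := sp_hasDerivAt_fst hw τ x
  have rh1 := sp_hasDerivAt_fst hρh τ x
  have wh1 := sp_hasDerivAt_fst hwh τ x
  have r2 := sp_hasDerivAt_snd hρ τ x
  have w2 := sp_hasDerivAt_snd hw τ x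
  have rh2 := sp_hasDerivAt_snd hρh τ x
  have wh2 := sp_hasDerivAt_snd hwh τ x
  have a2 := (ha.differentiable one_ne_zero x).hasDerivAt
  have z2 := (hz.differentiable one_ne_zero x).hasDerivAt
  have dP : ∀ y, HasDerivAt (deriv P) (deriv (deriv P) y) y := sp_P1 (sp_dP hP)
  have m : HasDerivAt (fun y => a y * ρ τ y * w τ y) (deriv (fun y => a y * ρ τ y * w τ y) x) x :=
    ((a2.mul r2).mul w2).differentiableAt.hasDerivAt
  have mh : HasDerivAt (fun y => a y * ρh τ y * wh τ y)
      (deriv (fun y => a y * ρh τ y * wh τ y) x) x :=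
    ((a2.mul rh2).mul wh2).differentiableAt.hasDerivAt
  have h : HasDerivAt (fun y => ε ^ 2 * (w τ y) ^ 2 / 2 + deriv P (ρ τ y) + g * z y)
      (deriv (fun y => ε ^ 2 * (w τ y) ^ 2 / 2 + deriv P (ρ τ y) + g * z y) x) x :=
    (((((w2.pow 2).const_mul (ε ^ 2)).div_const 2).add ((dP (ρ τ x)).comp x r2)).add
      (z2.const_mul g)).differentiableAt.hasDerivAt
  have hh : HasDerivAt (fun y => εh ^ 2 * (wh τ y) ^ 2 / 2 + deriv P (ρh τ y) + g * z y)
      (deriv (fun y => εh ^ 2 * (wh τ y) ^ 2 / 2 + deriv P (ρh τ y) + g * z y) x) x :=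
    (((((wh2.pow 2).const_mul (εh ^ 2)).div_const 2).add ((dP (ρh τ x)).comp x rh2)).add
      (z2.const_mul g)).differentiableAt.hasDerivAt
  have hF := ((m.sub mh).mul ((h.sub hh).sub
    (((wh2.pow 2).const_mul (ε ^ 2 - εh ^ 2)).div_const 2))).deriv
  have hE := ((((((sp_P1 hP (ρ τ x)).comp τ r1).sub ((sp_P1 hP (ρh τ x)).comp τ rh1)).sub
    (((dP (ρh τ x)).comp τ rh1).mul (r1.sub rh1))).add
    ((((r1.mul ((w1.sub wh1).pow 2)).div_const 2).add
      (((r1.sub rh1).mul wh1).mul (w1.sub wh1))).const_mul (ε ^ 2))).const_mul (a x)).deriv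
  have hF' : deriv (fun y => spF P a z g ε εh ρ w ρh wh τ y) x = _ := hF
  have hE' : deriv (fun t => spE P a ε ρ w ρh wh t x) τ = _ := hE
  rw [hE', hF']
  simp only [Pi.sub_apply, Pi.pow_apply, Function.comp_apply, Pi.mul_apply]
  generalize deriv (fun y => a y * ρ τ y * w τ y) x = mx at *
  generalize deriv (fun y => a y * ρh τ y * wh τ y) x = mhx at *
  generalize deriv (fun y => ε ^ 2 * (w τ y) ^ 2 / 2 + deriv P (ρ τ y) + g * z y) x = hx at *
  generalize deriv (fun y => εh ^ 2 * (wh τ y) ^ 2 / 2 + deriv P (ρh τ y) + g * z y) x = hhx at *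
  generalize deriv (fun s => ρ s x) τ = rt at *
  generalize deriv (fun s => w s x) τ = wt at *
  generalize deriv (fun s => ρh s x) τ = rht at *
  generalize deriv (fun s => wh s x) τ = wht at *
  push_cast
  linear_combination ((ε ^ 2 * (w τ x) ^ 2 / 2 + deriv P (ρ τ x))
      - (ε ^ 2 * (wh τ x) ^ 2 / 2 + deriv P (ρh τ x))) * (E1 - E3)
    + a x * (ρ τ x * w τ x - ρh τ x * wh τ x) * (E2 - E4)
end

lemma sp_lip_fst {f : ℝ → ℝ → ℝ} {K : NNReal} (hf : LipschitzWith K (Function.uncurry f))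
    (s x : ℝ) : |deriv (fun t => f t x) s| ≤ K := by
  have h : LipschitzWith K (fun t => f t x) := by
    apply LipschitzWith.of_dist_le_mul
    intro t1 t2
    have := hf.dist_le_mul (t1, x) (t2, x)
    simpa [Prod.dist_eq] using this
  exact norm_deriv_le_of_lipschitz h

lemma sp_lip_snd {f : ℝ → ℝ → ℝ} {K : NNReal} (hf : LipschitzWith K (Function.uncurry f))
    (s x : ℝ) : |deriv (fun y => f s y) x| ≤ K := by
  have h : LipschitzWith K (fun y => f s y) := by
    apply LipschitzWith.of_dist_le_mul
    intro t1 t2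
    have := hf.dist_le_mul (s, t1) (s, t2)
    simpa [Prod.dist_eq] using this
  exact norm_deriv_le_of_lipschitz h

lemma sp_bd_deriv {f : ℝ → ℝ} (hf : Continuous f) (lo hi : ℝ) :
    ∃ L, 0 ≤ L ∧ ∀ r ∈ Set.Icc lo hi, |f r| ≤ L := by
  obtain ⟨L, hL⟩ := isCompact_Icc.exists_bound_of_continuousOn (s := Set.Icc lo hi) hf.continuousOn
  exact ⟨max L 0, le_max_right _ _, fun r hr => (hL r hr).trans (le_max_left _ _)⟩


set_option maxHeartbeats 2000000 in
/-- stability estimate for the rescaled barotropic gas flow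
system on a single pipe. Under assumptions (A1)–(A2) there exist constants
`ĉ, Ĉ > 0`, depending only on the bounds in (A1)–(A2) and the Lipschitz bounds
of `(ρ̂,ŵ)`, such that for any pair of classical solutions `(ρ,w)` (parameters
`ε,γ`) and `(ρ̂,ŵ)` (parameters `ε̂,γ̂`, Lipschitz continuous) and all
`τ ∈ [0,T]`:
`‖ρ(τ)−ρ̂(τ)‖²_{L²} + ε²‖w(τ)−ŵ(τ)‖²_{L²} + ∫₀^τ ‖w−ŵ‖³_{L³} ds
 ≤ Ĉ e^{ĉτ} (‖ρ(0)−ρ̂(0)‖²_{L²} + ε²‖w(0)−ŵ(0)‖²_{L²}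
    + |γ−γ̂|^{3/2} + |ε²−ε̂²| + ∫₀^τ |h_∂−ĥ_∂|_∂ ds)`. -/
theorem stability_estimate_single_pipe
    (ℓ T g : ℝ) (hℓ : 0 < ℓ) (hT : 0 ≤ T)
    (P : ℝ → ℝ) (hP : ContDiff ℝ (⊤ : ℕ∞) P) (hPconv : StrictConvexOn ℝ (Set.Ioi 0) P)
    (rlo rhi wbar εbar alo ahi γlo γhi gzbar : ℝ) (K : NNReal)
    (hrlo : 0 < rlo) (hrr : rlo ≤ rhi) (hwbar : 0 < wbar) (hεbar : 0 < εbar)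
    (halo : 0 < alo) (haa : alo ≤ ahi) (hγlo : 0 < γlo) (hγγ : γlo ≤ γhi)
    -- (A1): subsonicity condition on the pressure potential
    (hA1 : ∀ r ∈ Set.Icc rlo rhi, 4 * εbar ^ 2 * wbar ^ 2 ≤ r * deriv (deriv P) r) :
    ∃ chat Chat : ℝ, 0 < chat ∧ 0 < Chat ∧
      ∀ (a z : ℝ → ℝ) (ε εh γ γh : ℝ) (ρ w ρh wh : ℝ → ℝ → ℝ),
        ContDiff ℝ 1 a → ContDiff ℝ 1 z →
        (∀ x, alo ≤ a x ∧ a x ≤ ahi) → (∀ x, |g * z x| ≤ gzbar) →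
        0 ≤ ε → ε ≤ εbar → 0 ≤ εh → εh ≤ εbar →
        γlo ≤ γ → γ ≤ γhi → γlo ≤ γh → γh ≤ γhi →
        -- classical solutions: C¹ regularity
        ContDiff ℝ 1 (Function.uncurry ρ) → ContDiff ℝ 1 (Function.uncurry w) →
        ContDiff ℝ 1 (Function.uncurry ρh) → ContDiff ℝ 1 (Function.uncurry wh) →
        -- (ρ̂,ŵ) is Lipschitz continuous
        LipschitzWith K (Function.uncurry ρh) →
        LipschitzWith K (Function.uncurry wh) →
        -- (A2): uniform state bounds
        (∀ τ ∈ Set.Icc (0:ℝ) T, ∀ x ∈ Set.Icc (0:ℝ) ℓ,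
          rlo ≤ ρ τ x ∧ ρ τ x ≤ rhi ∧ rlo ≤ ρh τ x ∧ ρh τ x ≤ rhi
            ∧ |w τ x| ≤ wbar ∧ |wh τ x| ≤ wbar) →
        -- (ρ,w) solves the system with parameters ε, γ
        (∀ τ ∈ Set.Icc (0:ℝ) T, ∀ x ∈ Set.Icc (0:ℝ) ℓ,
          a x * deriv (fun s => ρ s x) τ
            + deriv (fun y => a y * ρ τ y * w τ y) x = 0) →
        (∀ τ ∈ Set.Icc (0:ℝ) T, ∀ x ∈ Set.Icc (0:ℝ) ℓ,
          ε ^ 2 * deriv (fun s => w s x) τ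
            + deriv (fun y => ε ^ 2 * (w τ y) ^ 2 / 2 + deriv P (ρ τ y) + g * z y) x
            + γ * |w τ x| * w τ x = 0) →
        -- (ρ̂,ŵ) solves the system with parameters ε̂, γ̂
        (∀ τ ∈ Set.Icc (0:ℝ) T, ∀ x ∈ Set.Icc (0:ℝ) ℓ,
          a x * deriv (fun s => ρh s x) τ
            + deriv (fun y => a y * ρh τ y * wh τ y) x = 0) →
        (∀ τ ∈ Set.Icc (0:ℝ) T, ∀ x ∈ Set.Icc (0:ℝ) ℓ,
          εh ^ 2 * deriv (fun s => wh s x) τ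
            + deriv (fun y => εh ^ 2 * (wh τ y) ^ 2 / 2 + deriv P (ρh τ y) + g * z y) x
            + γh * |wh τ x| * wh τ x = 0) →
        -- stability estimate
        ∀ τ ∈ Set.Icc (0:ℝ) T,
          (∫ x in (0:ℝ)..ℓ, (ρ τ x - ρh τ x) ^ 2)
              + ε ^ 2 * (∫ x in (0:ℝ)..ℓ, (w τ x - wh τ x) ^ 2)
              + (∫ s in (0:ℝ)..τ, ∫ x in (0:ℝ)..ℓ, |w s x - wh s x| ^ 3)
            ≤ Chat * Real.exp (chat * τ) *
              ((∫ x in (0:ℝ)..ℓ, (ρ 0 x - ρh 0 x) ^ 2)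
                + ε ^ 2 * (∫ x in (0:ℝ)..ℓ, (w 0 x - wh 0 x) ^ 2)
                + |γ - γh| ^ ((3:ℝ) / 2) + |ε ^ 2 - εh ^ 2|
                + ∫ s in (0:ℝ)..τ, Real.sqrt
                    (((ε ^ 2 * (w s 0) ^ 2 / 2 + deriv P (ρ s 0) + g * z 0)
                        - (εh ^ 2 * (wh s 0) ^ 2 / 2 + deriv P (ρh s 0) + g * z 0)) ^ 2
                      + ((ε ^ 2 * (w s ℓ) ^ 2 / 2 + deriv P (ρ s ℓ) + g * z ℓ)
                        - (εh ^ 2 * (wh s ℓ) ^ 2 / 2 + deriv P (ρh s ℓ) + g * z ℓ)) ^ 2)) := by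
  obtain ⟨L1, hL10, hL1⟩ := sp_bd_deriv (sp_dP (sp_dP hP)).continuous rlo rhi
  obtain ⟨L2, hL20, hL2⟩ := sp_bd_deriv (sp_dP (sp_dP (sp_dP hP))).continuous rlo rhi
  obtain ⟨C2, C3, C4, hC2, hC3, hC4, hpt⟩ := sp_point (L := L2) (K := (K : ℝ)) hrlo hrr hwbar hεbar
    hγlo hγγ hL20 K.2
  have hrhi : 0 < rhi := by linarith
  have hahi : 0 < ahi := by linarith
  obtain ⟨c, hc0, hc1, hc2⟩ : ∃ c : ℝ, 0 < c ∧
      (∀ r ∈ Set.Icc rlo rhi, 4 * c ≤ deriv (deriv P) r) ∧ 4 * c ≤ rlo := by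
    refine ⟨min (4 * εbar ^ 2 * wbar ^ 2 / rhi) rlo / 4, by positivity, ?_, ?_⟩
    · intro r hr
      have h1 := hA1 r hr
      have hr0 : 0 < r := lt_of_lt_of_le hrlo hr.1
      have hd0 : 0 < deriv (deriv P) r := by
        have : 0 < r * deriv (deriv P) r := lt_of_lt_of_le (by positivity) h1
        exact pos_of_mul_pos_right this hr0.le
      have h2 : 4 * εbar ^ 2 * wbar ^ 2 / rhi ≤ deriv (deriv P) r := by
        rw [div_le_iff₀ hrhi]
        have : r * deriv (deriv P) r ≤ rhi * deriv (deriv P) r := by gcongr; exact hr.2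
        linarith
      have := min_le_left (4 * εbar ^ 2 * wbar ^ 2 / rhi) rlo
      linarith
    · have := min_le_right (4 * εbar ^ 2 * wbar ^ 2 / rhi) rlo
      linarith
  set D := rlo * γlo with hD
  have hDpos : 0 < D := by positivity
  set C1 := L1 + rhi + wbar * (1 + εbar ^ 2) with hC1
  have hC1pos : 0 < C1 := by positivity
  set μ := min (alo * c) (alo * (D / 8)) with hμ
  have hμpos : 0 < μ := by positivity
  set B := 2 * ahi * rhi * wbar with hB
  have hBpos : 0 < B := by positivity
  set Q := ahi * C1 + T * (ℓ * (ahi * C3)) + (T * (ℓ * (ahi * C4)) + T * (B * wbar ^ 2))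
    + 2 * B with hQ
  have hQpos : 0 < Q := by positivity
  refine ⟨C2 / c, Q / μ, by positivity, by positivity, ?_⟩
  intro a z ε εh γ γh ρ w ρh wh ha hz hab hzb hε hεb hεh hεhb hγ1 hγ2 hγh1 hγh2 hρ hw hρh hwh
    hLρ hLw hst E1 E2 E3 E4 τ hτ
  have hsub : ∀ s ∈ Set.Icc 0 τ, s ∈ Set.Icc 0 T := fun s hs => ⟨hs.1, hs.2.trans hτ.2⟩
  have ha0 : ∀ x, 0 < a x := fun x => lt_of_lt_of_le halo (hab x).1
  have hGc : (0:ℝ) ≤ |γ - γh| ^ ((3:ℝ) / 2) := by positivity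
  set Γ := |γ - γh| ^ ((3:ℝ) / 2) with hΓ
  set Δ := |ε ^ 2 - εh ^ 2| with hΔ
  have hΔ0 : 0 ≤ Δ := abs_nonneg _
  set bs : ℝ → ℝ := fun s => Real.sqrt
                    (((ε ^ 2 * (w s 0) ^ 2 / 2 + deriv P (ρ s 0) + g * z 0)
                        - (εh ^ 2 * (wh s 0) ^ 2 / 2 + deriv P (ρh s 0) + g * z 0)) ^ 2
                      + ((ε ^ 2 * (w s ℓ) ^ 2 / 2 + deriv P (ρ s ℓ) + g * z ℓ)
                        - (εh ^ 2 * (wh s ℓ) ^ 2 / 2 + deriv P (ρh s ℓ) + g * z ℓ)) ^ 2) with hbs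
  have cP := (sp_dP hP).continuous
  have cρ : Continuous (fun p : ℝ × ℝ => ρ p.1 p.2) := hρ.continuous
  have cw : Continuous (fun p : ℝ × ℝ => w p.1 p.2) := hw.continuous
  have cρh : Continuous (fun p : ℝ × ℝ => ρh p.1 p.2) := hρh.continuous
  have cwh : Continuous (fun p : ℝ × ℝ => wh p.1 p.2) := hwh.continuous
  have hbsc : Continuous bs := by
    have f1 : ∀ x, Continuous (fun s => ρ s x) := fun x => sp_cont_fst cρ x
    have f2 : ∀ x, Continuous (fun s => w s x) := fun x => sp_cont_fst cw x
    have f3 : ∀ x, Continuous (fun s => ρh s x) := fun x => sp_cont_fst cρh x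
    have f4 : ∀ x, Continuous (fun s => wh s x) := fun x => sp_cont_fst cwh x
    have g1 : ∀ x, Continuous (fun s => deriv P (ρ s x)) := fun x => cP.comp (f1 x)
    have g3 : ∀ x, Continuous (fun s => deriv P (ρh s x)) := fun x => cP.comp (f3 x)
    have k1 := f2 0
    have k2 := f2 ℓ
    have k3 := f4 0
    have k4 := f4 ℓ
    have k5 := g1 0
    have k6 := g1 ℓ
    have k7 := g3 0
    have k8 := g3 ℓ
    simp only [hbs]
    fun_prop
  have hbs0 : ∀ s, 0 ≤ bs s := fun s => Real.sqrt_nonneg _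
  have hEC := spE_contDiff (ε := ε) hP ha hρ hw hρh hwh
  have hFC := spF_contDiff (g := g) (ε := ε) (εh := εh) hP ha hz hρ hw hρh hwh
  have hVC : Continuous (Function.uncurry fun s x => |w s x - wh s x| ^ 3) := by
    change Continuous (fun p : ℝ × ℝ => |w p.1 p.2 - wh p.1 p.2| ^ 3)
    fun_prop
  -- boundary flux
  have hflux : ∀ s ∈ Set.Icc 0 T, ∀ x ∈ Set.Icc 0 ℓ, |spF P a z g ε εh ρ w ρh wh s x|
      ≤ B * (|(ε ^ 2 * (w s x) ^ 2 / 2 + deriv P (ρ s x) + g * z x)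
                        - (εh ^ 2 * (wh s x) ^ 2 / 2 + deriv P (ρh s x) + g * z x)|
        + Δ * wbar ^ 2 / 2) := by
    intro s hs x hx
    obtain ⟨b1, b2, b3, b4, b5, b6⟩ := hst s hs x hx
    unfold spF
    rw [abs_mul]
    have hρ0 : 0 < ρ s x := by linarith
    have hρh0 : 0 < ρh s x := by linarith
    have h1 : |a x * ρ s x * w s x - a x * ρh s x * wh s x| ≤ B := by
      refine (abs_sub _ _).trans ?_
      rw [abs_mul, abs_mul, abs_mul, abs_mul, abs_of_pos hρ0, abs_of_pos hρh0, abs_of_pos (ha0 x)]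
      have h1 : a x * ρ s x * |w s x| ≤ ahi * rhi * wbar := by
        have := (hab x).2
        gcongr
      have h2 : a x * ρh s x * |wh s x| ≤ ahi * rhi * wbar := by
        have := (hab x).2
        gcongr
      rw [hB]; linarith
    have h2 : |(ε ^ 2 - εh ^ 2) * (wh s x) ^ 2 / 2| ≤ Δ * wbar ^ 2 / 2 := by
      rw [abs_div, abs_mul, abs_pow, abs_two]
      gcongr
    have h3 := abs_sub ((ε ^ 2 * (w s x) ^ 2 / 2 + deriv P (ρ s x) + g * z x)
                        - (εh ^ 2 * (wh s x) ^ 2 / 2 + deriv P (ρh s x) + g * z x))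
                        ((ε ^ 2 - εh ^ 2) * (wh s x) ^ 2 / 2)
    apply mul_le_mul h1 _ (abs_nonneg _) hBpos.le
    linarith
  have main := sp_energy (spE P a ε ρ w ρh wh) (spF P a z g ε εh ρ w ρh wh)
    (fun s x => |w s x - wh s x| ^ 3) (fun s => B * (2 * bs s + Δ * wbar ^ 2)) (C2 / c)
    (alo * (D / 8)) (ahi * (C3 * Γ + C4 * Δ)) ℓ τ hEC hFC hVC (by fun_prop)
    (by positivity) (by positivity) (by positivity) hℓ.le hτ.1 (fun s x => by positivity)
    (by
      intro s hs x hx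
      have hs' := hsub s hs
      obtain ⟨b1, b2, b3, b4, b5, b6⟩ := hst s hs' x hx
      rw [sp_balance hP ha hz hρ hw hρh hwh s x (E1 s hs' x hx) (E2 s hs' x hx) (E3 s hs' x hx)
        (E4 s hs' x hx)]
      have hrem := sp_taylor_bd (f := deriv P) ((sp_dP hP).of_le (by norm_cast)) hL2
        (x := ρh s x) (y := ρ s x) ⟨b3, b4⟩ ⟨b1, b2⟩
      have hp := hpt (ρ s x) (w s x) (ρh s x) (wh s x) ε εh γ γh
        (deriv (fun s => ρh s x) s) (deriv (fun s => wh s x) s) (deriv (fun y => wh s y) x) _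
        ⟨b1, b2⟩ ⟨b3, b4⟩ b5 b6 hε hεb hγ1 hγ2 hγh1 hγh2 (sp_lip_fst hLρ s x) (sp_lip_fst hLw s x)
        (sp_lip_snd hLw s x) hrem
      refine (mul_le_mul_of_nonneg_left hp (ha0 x).le).trans ?_
      have hco := sp_coercive hP hrlo hA1 hε hεb hwbar hc1 hc2 (ρ := ρ s x) (w := w s x)
        (ρh := ρh s x) (wh := wh s x) ⟨b1, b2⟩ ⟨b3, b4⟩ b5 b6
      have hco2 : a x * (C2 * ((ρ s x - ρh s x) ^ 2 + ε ^ 2 * (w s x - wh s x) ^ 2))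
          ≤ C2 / c * spE P a ε ρ w ρh wh s x := by
        have h := mul_le_mul_of_nonneg_left hco
          (show 0 ≤ C2 / c * a x from mul_nonneg (by positivity) (ha0 x).le)
        have e : C2 / c * a x * (c * ((ρ s x - ρh s x) ^ 2 + ε ^ 2 * (w s x - wh s x) ^ 2))
          = a x * (C2 * ((ρ s x - ρh s x) ^ 2 + ε ^ 2 * (w s x - wh s x) ^ 2)) := by
          field_simp
        rw [e] at h
        refine h.trans (le_of_eq ?_)
        unfold spE; ring
      have hv3 : alo * (D / 8 * |w s x - wh s x| ^ 3) ≤ a x * (D / 8 * |w s x - wh s x| ^ 3) := by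
        have := (hab x).1
        gcongr
      have hbb : a x * (C3 * Γ + C4 * Δ) ≤ ahi * (C3 * Γ + C4 * Δ) := by
        have := (hab x).2
        gcongr
      linear_combination hco2 + hv3 + hbb)
    (by
      intro s hs
      have hs' := hsub s hs
      have f0 := hflux s hs' 0 ⟨le_refl _, hℓ.le⟩
      have f1 := hflux s hs' ℓ ⟨hℓ.le, le_refl _⟩
      have g0 : |(ε ^ 2 * (w s 0) ^ 2 / 2 + deriv P (ρ s 0) + g * z 0)
                        - (εh ^ 2 * (wh s 0) ^ 2 / 2 + deriv P (ρh s 0) + g * z 0)| ≤ bs s :=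
        Real.abs_le_sqrt (le_add_of_nonneg_right (sq_nonneg _))
      have g1 : |(ε ^ 2 * (w s ℓ) ^ 2 / 2 + deriv P (ρ s ℓ) + g * z ℓ)
                        - (εh ^ 2 * (wh s ℓ) ^ 2 / 2 + deriv P (ρh s ℓ) + g * z ℓ)| ≤ bs s :=
        Real.abs_le_sqrt (le_add_of_nonneg_left (sq_nonneg _))
      have k0 := mul_le_mul_of_nonneg_left g0 hBpos.le
      have k1 := mul_le_mul_of_nonneg_left g1 hBpos.le
      linear_combination f0 + f1 + k0 + k1)
  -- comparison of energy and norms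
  have hnorm : ∀ s, (∫ x in (0:ℝ)..ℓ, ((ρ s x - ρh s x) ^ 2 + ε ^ 2 * (w s x - wh s x) ^ 2))
      = (∫ x in (0:ℝ)..ℓ, (ρ s x - ρh s x) ^ 2) + ε ^ 2 * ∫ x in (0:ℝ)..ℓ, (w s x - wh s x) ^ 2 := by
    intro s
    have f1 := sp_cont_snd cρ s
    have f2 := sp_cont_snd cw s
    have f3 := sp_cont_snd cρh s
    have f4 := sp_cont_snd cwh s
    simp only at f1 f2 f3 f4
    rw [intervalIntegral.integral_add, intervalIntegral.integral_const_mul]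
    · exact Continuous.intervalIntegrable (by fun_prop) _ _
    · exact Continuous.intervalIntegrable (by fun_prop) _ _
  have hNint : ∀ s, IntervalIntegrable
      (fun x => (ρ s x - ρh s x) ^ 2 + ε ^ 2 * (w s x - wh s x) ^ 2) MeasureTheory.volume 0 ℓ := by
    intro s
    have f1 := sp_cont_snd cρ s
    have f2 := sp_cont_snd cw s
    have f3 := sp_cont_snd cρh s
    have f4 := sp_cont_snd cwh s
    simp only at f1 f2 f3 f4
    exact Continuous.intervalIntegrable (by fun_prop) _ _
  have hEint : ∀ s, IntervalIntegrable (fun x => spE P a ε ρ w ρh wh s x)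
      MeasureTheory.volume 0 ℓ := fun s =>
    (sp_cont_snd hEC.continuous s).intervalIntegrable _ _
  have hlow : (alo * c) * ((∫ x in (0:ℝ)..ℓ, (ρ τ x - ρh τ x) ^ 2)
      + ε ^ 2 * ∫ x in (0:ℝ)..ℓ, (w τ x - wh τ x) ^ 2)
      ≤ ∫ x in (0:ℝ)..ℓ, spE P a ε ρ w ρh wh τ x := by
    rw [← hnorm, ← intervalIntegral.integral_const_mul]
    apply intervalIntegral.integral_mono_on hℓ.le ((hNint τ).const_mul _) (hEint τ)
    intro x hx
    obtain ⟨b1, b2, b3, b4, b5, b6⟩ := hst τ hτ x hx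
    have hco := sp_coercive hP hrlo hA1 hε hεb hwbar hc1 hc2 (ρ := ρ τ x) (w := w τ x)
        (ρh := ρh τ x) (wh := wh τ x) ⟨b1, b2⟩ ⟨b3, b4⟩ b5 b6
    unfold spE
    rw [mul_assoc]
    exact mul_le_mul (hab x).1 hco (by positivity) (ha0 x).le
  have hup : (∫ x in (0:ℝ)..ℓ, spE P a ε ρ w ρh wh 0 x)
      ≤ (ahi * C1) * ((∫ x in (0:ℝ)..ℓ, (ρ 0 x - ρh 0 x) ^ 2)
      + ε ^ 2 * ∫ x in (0:ℝ)..ℓ, (w 0 x - wh 0 x) ^ 2) := by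
    rw [← hnorm, ← intervalIntegral.integral_const_mul]
    apply intervalIntegral.integral_mono_on hℓ.le (hEint 0) ((hNint 0).const_mul _)
    intro x hx
    obtain ⟨b1, b2, b3, b4, b5, b6⟩ := hst 0 ⟨le_refl _, hT⟩ x hx
    have hco := sp_upper hP hrlo hL1 hε hεb hwbar (ρ := ρ 0 x) (w := w 0 x)
        (ρh := ρh 0 x) (wh := wh 0 x) ⟨b1, b2⟩ ⟨b3, b4⟩ b6
    unfold spE
    rw [mul_assoc ahi]
    refine (mul_le_mul_of_nonneg_left hco (ha0 x).le).trans ?_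
    have := (hab x).2
    gcongr
  have hBdint : ∫ s in (0:ℝ)..τ, B * (2 * bs s + Δ * wbar ^ 2)
      = 2 * B * (∫ s in (0:ℝ)..τ, bs s) + τ * (B * (Δ * wbar ^ 2)) := by
    rw [intervalIntegral.integral_const_mul, intervalIntegral.integral_add,
      intervalIntegral.integral_const_mul]
    · simp; ring
    · exact (hbsc.const_mul 2).intervalIntegrable _ _
    · exact intervalIntegrable_const
  rw [hBdint] at main
  have hX0 : 0 ≤ ∫ x in (0:ℝ)..ℓ, (ρ 0 x - ρh 0 x) ^ 2 :=
    intervalIntegral.integral_nonneg hℓ.le (fun x _ => sq_nonneg _)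
  have hY0 : 0 ≤ ∫ x in (0:ℝ)..ℓ, (w 0 x - wh 0 x) ^ 2 :=
    intervalIntegral.integral_nonneg hℓ.le (fun x _ => sq_nonneg _)
  have hX1 : 0 ≤ ∫ x in (0:ℝ)..ℓ, (ρ τ x - ρh τ x) ^ 2 :=
    intervalIntegral.integral_nonneg hℓ.le (fun x _ => sq_nonneg _)
  have hY1 : 0 ≤ ∫ x in (0:ℝ)..ℓ, (w τ x - wh τ x) ^ 2 :=
    intervalIntegral.integral_nonneg hℓ.le (fun x _ => sq_nonneg _)
  have hV1 : 0 ≤ ∫ s in (0:ℝ)..τ, ∫ x in (0:ℝ)..ℓ, |w s x - wh s x| ^ 3 :=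
    intervalIntegral.integral_nonneg hτ.1 (fun s _ =>
      intervalIntegral.integral_nonneg hℓ.le (fun x _ => by positivity))
  have hB1 : 0 ≤ ∫ s in (0:ℝ)..τ, bs s :=
    intervalIntegral.integral_nonneg hτ.1 (fun s _ => hbs0 s)
  change _ ≤ Q / μ * Real.exp (C2 / c * τ) *
    ((∫ x in (0:ℝ)..ℓ, (ρ 0 x - ρh 0 x) ^ 2) + ε ^ 2 * (∫ x in (0:ℝ)..ℓ, (w 0 x - wh 0 x) ^ 2)
      + Γ + Δ + ∫ s in (0:ℝ)..τ, bs s)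
  generalize (∫ x in (0:ℝ)..ℓ, (ρ 0 x - ρh 0 x) ^ 2) = X0 at *
  generalize (∫ x in (0:ℝ)..ℓ, (w 0 x - wh 0 x) ^ 2) = Y0 at *
  generalize (∫ x in (0:ℝ)..ℓ, (ρ τ x - ρh τ x) ^ 2) = X1 at *
  generalize (∫ x in (0:ℝ)..ℓ, (w τ x - wh τ x) ^ 2) = Y1 at *
  generalize (∫ s in (0:ℝ)..τ, ∫ x in (0:ℝ)..ℓ, |w s x - wh s x| ^ 3) = V1 at *
  generalize (∫ s in (0:ℝ)..τ, bs s) = B1 at *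
  have hN1 : 0 ≤ X1 + ε ^ 2 * Y1 := by positivity
  have hN0 : 0 ≤ X0 + ε ^ 2 * Y0 := by positivity
  have s1 : μ * (X1 + ε ^ 2 * Y1 + V1)
      ≤ (∫ x in (0:ℝ)..ℓ, spE P a ε ρ w ρh wh τ x) + alo * (D / 8) * V1 := by
    have t1 : μ * (X1 + ε ^ 2 * Y1) ≤ alo * c * (X1 + ε ^ 2 * Y1) :=
      mul_le_mul_of_nonneg_right (min_le_left _ _) hN1
    have t2 : μ * V1 ≤ alo * (D / 8) * V1 :=
      mul_le_mul_of_nonneg_right (min_le_right _ _) hV1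
    linarith
  have s2 : (∫ x in (0:ℝ)..ℓ, spE P a ε ρ w ρh wh 0 x) + τ * (ℓ * (ahi * (C3 * Γ + C4 * Δ)))
      + (2 * B * B1 + τ * (B * (Δ * wbar ^ 2))) ≤ Q * (X0 + ε ^ 2 * Y0 + Γ + Δ + B1) := by
    have hτT := hτ.2
    have hτ0 := hτ.1
    have p1 : 0 ≤ ahi * C1 := by positivity
    have p2 : 0 ≤ T * (ℓ * (ahi * C3)) := by positivity
    have p3 : 0 ≤ T * (ℓ * (ahi * C4)) + T * (B * wbar ^ 2) := by positivity
    have p4 : 0 ≤ 2 * B := by positivity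
    have q1 : ahi * C1 * (X0 + ε ^ 2 * Y0) ≤ Q * (X0 + ε ^ 2 * Y0) :=
      mul_le_mul_of_nonneg_right (by linarith) hN0
    have q2 : τ * (ℓ * (ahi * C3)) * Γ ≤ Q * Γ := by
      apply mul_le_mul_of_nonneg_right _ hGc
      have : τ * (ℓ * (ahi * C3)) ≤ T * (ℓ * (ahi * C3)) := by gcongr
      linarith
    have q3 : (τ * (ℓ * (ahi * C4)) + τ * (B * wbar ^ 2)) * Δ ≤ Q * Δ := by
      apply mul_le_mul_of_nonneg_right _ hΔ0
      have : τ * (ℓ * (ahi * C4)) ≤ T * (ℓ * (ahi * C4)) := by gcongr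
      have : τ * (B * wbar ^ 2) ≤ T * (B * wbar ^ 2) := by gcongr
      linarith
    have q4 : 2 * B * B1 ≤ Q * B1 := mul_le_mul_of_nonneg_right (by linarith) hB1
    linear_combination hup + q1 + q2 + q3 + q4
  have s3 : μ * (X1 + ε ^ 2 * Y1 + V1)
      ≤ Real.exp (C2 / c * τ) * (Q * (X0 + ε ^ 2 * Y0 + Γ + Δ + B1)) :=
    (s1.trans main).trans (mul_le_mul_of_nonneg_left s2 (Real.exp_pos _).le)
  have s4 : Q / μ * Real.exp (C2 / c * τ) * (X0 + ε ^ 2 * Y0 + Γ + Δ + B1)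
      = Real.exp (C2 / c * τ) * (Q * (X0 + ε ^ 2 * Y0 + Γ + Δ + B1)) / μ := by
    ring
  rw [s4, le_div_iff₀ hμpos]
  linarith
end
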